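/- Let K be a field of characteristic zero, n ≥ 1, and let Γ be a subgroup of GL_n(K). If Γ is boundedly generated by semi-simple elements, i.e., there exist semi-simple elements γ₁, …, γ_r ∈ Γ with Γ = ⟨γ₁⟩⋯⟨γ_r⟩ (every element of Γ can be written as γ₁^{k₁}⋯γ_r^{k_r} with k₁, …, k_r ∈ ℤ), then Γ is virtually solvable. -/

import Mathlib

open Matrix

/-- An element of `GL n K` is semi-simple if the corresponding linear endomorphism
of `K^n` is a semisimple endomorphism. -/
def IsSemisimpleElt {n : ℕ} {K : Type*} [Field K] (g : GL (Fin n) K) : Prop :=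
  Module.End.IsSemisimple ((g : Matrix (Fin n) (Fin n) K).mulVecLin)

/-- A group is virtually solvable if it has a solvable subgroup of finite index. -/
def IsVirtuallySolvable (G : Type*) [Group G] : Prop :=
  ∃ H : Subgroup G, H.FiniteIndex ∧ IsSolvable ↥H

/-!
Let `u` and `v` be elements of the group with commutator `x ≠ 1`. The group, together with matrices
diagonalizing the generators `γᵢ`, is defined over a finitely generated ring, which reduces modulo
infinitely many primes `p`. Modulo `p` each `γᵢ` has order dividing `p - 1`, so, if `p - 1 ∣ T` for
all `p` in a finite set `P`, bounded generation forces the image of the group in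
`∏ p ∈ P, GLₙ(𝔽ₚ)` to have at most `T ^ r` elements. Once `∏ p ∈ P, p > T ^ r`, some `p ∈ P` does
not divide the order of the image in `GLₙ(𝔽ₚ)`. This image therefore lifts to characteristic zero,
and Jordan's theorem gives it a commutative subgroup of index bounded in terms of `n` alone; no two
elements of the preimage have commutator `x`. A finitely generated group has only finitely many
subgroups of bounded index, so one subgroup of finite index avoids every `x ≠ 1`: it is commutative.

If no such `P` and `T` existed, then, since `T` is divisible by `p - 1` with density `1 / (p - 1)`,
averaging `∑ log p` over `p - 1 ∣ T` against `log T` would only bound `∑ p⁻ˢ log p` over the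
available primes by a multiple of `1 / (s - 1)`, which is consistent with the pole of a Dedekind
zeta function. Adjoining the `m`-th roots of unity keeps the primes that are `1` modulo `m`: there
averaging gains a factor `m`, of which the growth of the degree of the field costs only `φ(m)`, and
`φ(m) / m` can be made arbitrarily small.
-/

open NumberField Filter Topology ENNReal IsDedekindDomain
open scoped nonZeroDivisors TensorProduct commutatorElement

section DirichletSums

/-- The term `n⁻ˢ` of a Dirichlet series, valued in `ℝ≥0∞` so that sums can be rearranged freely.
The power is taken in `ℝ`, so that the term at `n = 0` is `0` (and not `⊤`). -/
noncomputable def invPow (s : ℝ) (n : ℕ) : ℝ≥0∞ := ENNReal.ofReal ((n : ℝ) ^ (-s))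

lemma invPow_zero {s : ℝ} (hs : 1 < s) : invPow s 0 = 0 := by
  simp [invPow, Real.zero_rpow (show -s ≠ 0 by linarith)]

lemma invPow_mul (s : ℝ) (m n : ℕ) : invPow s (m * n) = invPow s m * invPow s n := by
  rw [invPow, Nat.cast_mul, Real.mul_rpow (by positivity) (by positivity),
    ENNReal.ofReal_mul (by positivity), invPow, invPow]

variable {ι : Type*} (N : ι → ℕ)

/-- The Dirichlet series `∑ N(i)⁻ˢ` of a family with norm `N`: the Riemann zeta function for
`N = id` on `ℕ`, the Dedekind zeta function for the absolute norm of ideals. -/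
noncomputable def zetaSum (s : ℝ) : ℝ≥0∞ := ∑' i, invPow s (N i)

/-- The series `∑ log N(i) N(i)⁻ˢ`, which is minus the derivative of `zetaSum N`. -/
noncomputable def logZetaSum (s : ℝ) : ℝ≥0∞ :=
  ∑' i, ENNReal.ofReal (Real.log (N i)) * invPow s (N i)

/-- `Z s` is asymptotic to `κ / (s - 1)` as `s → 1⁺`, for some `0 < κ < ∞`. -/
def HasSimplePoleAtOne (Z : ℝ → ℝ≥0∞) : Prop :=
  ∃ κ, κ ≠ 0 ∧ κ ≠ ⊤ ∧ Tendsto (fun s => ENNReal.ofReal (s - 1) * Z s) (𝓝[>] 1) (𝓝 κ)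

lemma tendsto_one_add_mul_sub_one {c : ℝ} (hc : 0 < c) :
    Tendsto (fun s : ℝ => 1 + c * (s - 1)) (𝓝[>] 1) (𝓝[>] 1) := by
  refine tendsto_nhdsWithin_of_tendsto_nhds_of_eventually_within _ ?_ ?_
  · have : Continuous fun s : ℝ => 1 + c * (s - 1) := by fun_prop
    simpa using (this.tendsto 1).mono_left nhdsWithin_le_nhds
  · filter_upwards [self_mem_nhdsWithin] with s hs
    have : 0 < c * (s - 1) := mul_pos hc (sub_pos.mpr hs)
    simp only [Set.mem_Ioi]
    linarith

namespace HasSimplePoleAtOne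

variable {Z : ℝ → ℝ≥0∞}

lemma eventually_ne_zero_and_ne_top (hZ : HasSimplePoleAtOne Z) :
    ∀ᶠ s in 𝓝[>] 1, Z s ≠ 0 ∧ Z s ≠ ⊤ := by
  obtain ⟨κ, hκ0, hκt, hlim⟩ := hZ
  filter_upwards [hlim.eventually_ne hκ0, hlim.eventually_ne hκt, self_mem_nhdsWithin]
    with s h0 htop hs
  have hδ : ENNReal.ofReal (s - 1) ≠ 0 := by simpa using hs
  exact ⟨right_ne_zero_of_mul h0, fun h => htop (by rw [h, ENNReal.mul_top hδ])⟩

lemma eventually_rescale_le (hZ : HasSimplePoleAtOne Z) {c d : ℝ} (hc : 0 < c) (hcd : 1 < c * d) :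
    ∀ᶠ s in 𝓝[>] 1, Z (1 + c * (s - 1)) ≤ ENNReal.ofReal d * Z s := by
  obtain ⟨κ, hκ0, hκt, hlim⟩ := hZ
  have hrescaled := hlim.comp (tendsto_one_add_mul_sub_one hc)
  have hscaled := ENNReal.Tendsto.const_mul (a := ENNReal.ofReal (c * d)) hlim (.inr ofReal_ne_top)
  have hκ : κ < ENNReal.ofReal (c * d) * κ := by
    conv_lhs => rw [← one_mul κ]
    exact (ENNReal.mul_lt_mul_iff_left hκ0 hκt).mpr (by simpa using hcd)
  filter_upwards [hrescaled.eventually_lt hscaled hκ, self_mem_nhdsWithin] with s hlt hs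
  have hδ : 0 < s - 1 := sub_pos.mpr hs
  have hcδ : ENNReal.ofReal (c * (s - 1)) ≠ 0 := by simpa using mul_pos hc hδ
  refine (ENNReal.mul_le_mul_iff_right hcδ ofReal_ne_top).mp (hlt.le.trans_eq' ?_ |>.trans_eq ?_)
  · simp
  · rw [ENNReal.ofReal_mul hc.le, ENNReal.ofReal_mul hc.le]
    ring

end HasSimplePoleAtOne

lemma exp_mul_log_mul_rpow {n : ℕ} (hn : n ≠ 0) (s δ : ℝ) :
    Real.exp (δ * Real.log n) * (n : ℝ) ^ (-s) = (n : ℝ) ^ (-(s - δ)) := by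
  have hn' : (0 : ℝ) < n := by positivity
  rw [Real.rpow_def_of_pos hn', Real.rpow_def_of_pos hn', ← Real.exp_add]
  ring_nf

lemma invPow_le_invPow_add {s : ℝ} (hs : 1 < s) (n : ℕ) :
    invPow s n ≤ invPow (1 + 2 * (s - 1)) n
      + ENNReal.ofReal (s - 1) * (ENNReal.ofReal (Real.log n) * invPow s n) := by
  rcases eq_or_ne n 0 with rfl | hn
  · simp [invPow_zero hs]
  have hlog : 0 ≤ Real.log n := Real.log_natCast_nonneg n
  have hδ : 0 ≤ s - 1 := by linarith
  have hexp := exp_mul_log_mul_rpow hn s (-(s - 1))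
  have hpow : 0 < (n : ℝ) ^ (-s) := by positivity
  unfold invPow
  rw [← ENNReal.ofReal_mul hlog, ← ENNReal.ofReal_mul hδ,
    ← ENNReal.ofReal_add (by positivity) (by positivity)]
  refine ENNReal.ofReal_le_ofReal ?_
  rw [show 1 + 2 * (s - 1) = s - -(s - 1) by ring, ← hexp]
  nlinarith [Real.add_one_le_exp (-(s - 1) * Real.log n)]

lemma log_mul_invPow_le {s : ℝ} (hs : 1 < s) (n : ℕ) :
    ENNReal.ofReal (2⁻¹ * (s - 1)) * (ENNReal.ofReal (Real.log n) * invPow s n)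
      ≤ invPow (1 + 2⁻¹ * (s - 1)) n := by
  rcases eq_or_ne n 0 with rfl | hn
  · simp [invPow_zero hs]
  have hlog : 0 ≤ Real.log n := Real.log_natCast_nonneg n
  have hδ : 0 ≤ 2⁻¹ * (s - 1) := by linarith
  have hexp := exp_mul_log_mul_rpow hn s (2⁻¹ * (s - 1))
  have hpow : 0 < (n : ℝ) ^ (-s) := by positivity
  unfold invPow
  rw [← ENNReal.ofReal_mul hlog, ← ENNReal.ofReal_mul hδ]
  refine ENNReal.ofReal_le_ofReal ?_
  rw [show 1 + 2⁻¹ * (s - 1) = s - 2⁻¹ * (s - 1) by ring, ← hexp]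
  nlinarith [Real.add_one_le_exp (2⁻¹ * (s - 1) * Real.log n)]

variable {N}

theorem HasSimplePoleAtOne.zetaSum_le_logZetaSum (hZ : HasSimplePoleAtOne (zetaSum N)) :
    ∀ᶠ s in 𝓝[>] 1, zetaSum N s ≤ ENNReal.ofReal (3 * (s - 1)) * logZetaSum N s := by
  filter_upwards [hZ.eventually_rescale_le (c := 2) (d := 2 / 3) two_pos (by norm_num),
    hZ.eventually_ne_zero_and_ne_top, self_mem_nhdsWithin] with s hrescale ⟨_, hfinite⟩ hs
  have hconvex : zetaSum N s ≤ zetaSum N (1 + 2 * (s - 1))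
      + ENNReal.ofReal (s - 1) * logZetaSum N s := by
    simp only [zetaSum, logZetaSum]
    rw [← ENNReal.tsum_mul_left, ← ENNReal.tsum_add]
    exact ENNReal.tsum_le_tsum fun i => invPow_le_invPow_add hs _
  have hsplit : zetaSum N s = ENNReal.ofReal (2 / 3) * zetaSum N s
      + ENNReal.ofReal (1 / 3) * zetaSum N s := by
    rw [← add_mul, ← ENNReal.ofReal_add (by norm_num) (by norm_num)]
    norm_num
  have hthird : ENNReal.ofReal (1 / 3) * zetaSum N s ≤ ENNReal.ofReal (s - 1) * logZetaSum N s := by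
    have hfinite' := ENNReal.mul_ne_top (ofReal_ne_top (r := 2 / 3)) hfinite
    exact (ENNReal.add_le_add_iff_left hfinite').mp <|
      hsplit.symm.trans_le (hconvex.trans (by gcongr))
  calc zetaSum N s = ENNReal.ofReal 3 * (ENNReal.ofReal (1 / 3) * zetaSum N s) := by
        rw [← mul_assoc, ← ENNReal.ofReal_mul (by norm_num)]
        norm_num
    _ ≤ ENNReal.ofReal 3 * (ENNReal.ofReal (s - 1) * logZetaSum N s) := by gcongr
    _ = _ := by rw [← mul_assoc, ← ENNReal.ofReal_mul (by norm_num)]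

theorem HasSimplePoleAtOne.logZetaSum_le_zetaSum (hZ : HasSimplePoleAtOne (zetaSum N)) :
    ∀ᶠ s in 𝓝[>] 1, ENNReal.ofReal (s - 1) * logZetaSum N s ≤ 5 * zetaSum N s := by
  filter_upwards [hZ.eventually_rescale_le (c := 2⁻¹) (d := 5 / 2) (by norm_num) (by norm_num),
    self_mem_nhdsWithin] with s hrescale hs
  have hderiv : ENNReal.ofReal (2⁻¹ * (s - 1)) * logZetaSum N s
      ≤ zetaSum N (1 + 2⁻¹ * (s - 1)) := by
    rw [logZetaSum, ← ENNReal.tsum_mul_left]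
    exact ENNReal.tsum_le_tsum fun i => log_mul_invPow_le hs _
  calc ENNReal.ofReal (s - 1) * logZetaSum N s
      = ENNReal.ofReal 2 * (ENNReal.ofReal (2⁻¹ * (s - 1)) * logZetaSum N s) := by
        rw [← mul_assoc, ← ENNReal.ofReal_mul (by norm_num)]
        ring_nf
    _ ≤ ENNReal.ofReal 2 * (ENNReal.ofReal (5 / 2) * zetaSum N s) := by
        gcongr ENNReal.ofReal 2 * ?_
        exact hderiv.trans hrescale
    _ = 5 * zetaSum N s := by
        rw [← mul_assoc, ← ENNReal.ofReal_mul (by norm_num)]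
        norm_num

end DirichletSums

section Poles

lemma zetaSum_eq_ofReal_tsum {ι : Type*} {N : ι → ℕ} (hN : ∀ n, Finite {i // N i = n}) {s : ℝ}
    (hsum : Summable fun n : ℕ => (Nat.card {i // N i = n} : ℝ) * (n : ℝ) ^ (-s)) :
    zetaSum N s = ENNReal.ofReal (∑' n : ℕ, (Nat.card {i // N i = n} : ℝ) * (n : ℝ) ^ (-s)) := by
  rw [ENNReal.ofReal_tsum_of_nonneg (fun n => by positivity) hsum, zetaSum,
    ← (Equiv.sigmaFiberEquiv N).tsum_eq, ENNReal.tsum_sigma']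
  refine tsum_congr fun n => ?_
  have hfiber (x : {i // N i = n}) : invPow s (N (Equiv.sigmaFiberEquiv N ⟨n, x⟩)) = invPow s n :=
    congrArg _ x.2
  have := Fintype.ofFinite {i // N i = n}
  simp only [hfiber, tsum_fintype, Finset.sum_const, Finset.card_univ, nsmul_eq_mul,
    Nat.card_eq_fintype_card]
  rw [ENNReal.ofReal_mul (by positivity), ENNReal.ofReal_natCast, invPow]

lemma hasSimplePoleAtOne_zetaSum {ι : Type*} {N : ι → ℕ} (hN : ∀ n, Finite {i // N i = n})
    {κ : ℝ} (hκ : 0 < κ)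
    (hlim : Tendsto
      (fun s : ℝ => (s - 1) * ∑' n : ℕ, (Nat.card {i // N i = n} : ℝ) * (n : ℝ) ^ (-s))
      (𝓝[>] 1) (𝓝 κ)) :
    HasSimplePoleAtOne (zetaSum N) := by
  refine ⟨ENNReal.ofReal κ, by simpa using hκ, ofReal_ne_top, ?_⟩
  refine (ENNReal.tendsto_ofReal hlim).congr' ?_
  filter_upwards [hlim.eventually_ne hκ.ne', self_mem_nhdsWithin] with s hne hs
  have hsum := not_imp_comm.mp tsum_eq_zero_of_not_summable (right_ne_zero_of_mul hne)
  rw [zetaSum_eq_ofReal_tsum hN hsum, ENNReal.ofReal_mul (sub_nonneg.mpr (le_of_lt hs))]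

theorem hasSimplePoleAtOne_riemannZeta : HasSimplePoleAtOne (zetaSum (id : ℕ → ℕ)) := by
  refine hasSimplePoleAtOne_zetaSum (fun n => inferInstanceAs (Finite {i // i = n})) one_pos ?_
  refine tendsto_sub_mul_tsum_nat_rpow.congr fun s => ?_
  simp [Real.rpow_neg, id]

variable (E : Type*) [Field E] [NumberField E]

lemma dedekindZeta_ofReal {s : ℝ} (hs : 1 < s) :
    dedekindZeta E s = ((∑' n : ℕ,
      (Nat.card {I : Ideal (𝓞 E) // Ideal.absNorm I = n} : ℝ) * (n : ℝ) ^ (-s) : ℝ) : ℂ) := by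
  rw [Complex.ofReal_tsum, dedekindZeta, LSeries]
  refine tsum_congr fun n => ?_
  rcases eq_or_ne n 0 with rfl | hn
  · simp [Real.zero_rpow (show -s ≠ 0 by linarith)]
  · rw [LSeries.term_of_ne_zero hn]
    push_cast
    rw [Complex.ofReal_cpow (by positivity)]
    push_cast
    rw [Complex.cpow_neg, div_eq_mul_inv]

theorem hasSimplePoleAtOne_dedekindZeta :
    HasSimplePoleAtOne (zetaSum (Ideal.absNorm : Ideal (𝓞 E) → ℕ)) := by
  refine hasSimplePoleAtOne_zetaSum Ideal.finite_setOfPred_absNorm_eq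
    (dedekindZeta_residue_pos E) ?_
  have hre := (Complex.continuous_re.tendsto _).comp (tendsto_sub_one_mul_dedekindZeta_nhdsGT E)
  refine hre.congr' ?_
  filter_upwards [self_mem_nhdsWithin] with s hs
  rw [Function.comp_apply, dedekindZeta_ofReal E hs, ← Complex.ofReal_one, ← Complex.ofReal_sub,
    ← Complex.ofReal_mul, Complex.ofReal_re]

end Poles

section PrimePowers

lemma invPow_le_inv {s : ℝ} (hs : 1 < s) {n : ℕ} (hn : n ≠ 0) :
    invPow s n ≤ ENNReal.ofReal (n : ℝ)⁻¹ := by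
  rw [← Real.rpow_neg_one]
  refine ENNReal.ofReal_le_ofReal (Real.rpow_le_rpow_of_exponent_le ?_ (by linarith))
  exact_mod_cast Nat.one_le_iff_ne_zero.mpr hn

lemma log_le_four_mul_rpow {x : ℝ} (hx : 0 ≤ x) : Real.log x ≤ 4 * x ^ (1 / 4 : ℝ) := by
  have := Real.log_le_rpow_div hx (show (0 : ℝ) < 1 / 4 by norm_num)
  linarith

lemma tsum_log_mul_invPow_pow_le {s : ℝ} (hs : 1 < s) {q : ℕ} (hq : 2 ≤ q) (m : ℕ) :
    ∑' k : ℕ, ENNReal.ofReal (Real.log q) * invPow s (q ^ (k + m))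
      ≤ ENNReal.ofReal (8 * (q : ℝ) ^ (1 / 4 - m : ℝ)) := by
  have hq' : (2 : ℝ) ≤ q := by exact_mod_cast hq
  have hq0 : (0 : ℝ) < q := by linarith
  have hinv : (q : ℝ)⁻¹ ≤ 2⁻¹ := inv_anti₀ two_pos hq'
  have hgeom : HasSum (fun k : ℕ => (q : ℝ)⁻¹ ^ k) (1 - (q : ℝ)⁻¹)⁻¹ :=
    hasSum_geometric_of_lt_one (by positivity) (by linarith)
  have hgeom_le : (1 - (q : ℝ)⁻¹)⁻¹ ≤ 2 := inv_le_of_inv_le₀ two_pos (by linarith)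
  have hterm (k : ℕ) : invPow s (q ^ (k + m))
      ≤ ENNReal.ofReal ((q : ℝ)⁻¹ ^ m) * ENNReal.ofReal ((q : ℝ)⁻¹ ^ k) := by
    refine (invPow_le_inv hs (by positivity)).trans_eq ?_
    rw [← ENNReal.ofReal_mul (by positivity)]
    push_cast
    rw [← inv_pow, pow_add, mul_comm]
  calc ∑' k : ℕ, ENNReal.ofReal (Real.log q) * invPow s (q ^ (k + m))
      ≤ ∑' k : ℕ, ENNReal.ofReal (Real.log q)
          * (ENNReal.ofReal ((q : ℝ)⁻¹ ^ m) * ENNReal.ofReal ((q : ℝ)⁻¹ ^ k)) := by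
        gcongr with k
        exact hterm k
    _ = ENNReal.ofReal (Real.log q * ((q : ℝ)⁻¹ ^ m * (1 - (q : ℝ)⁻¹)⁻¹)) := by
        rw [ENNReal.tsum_mul_left, ENNReal.tsum_mul_left,
          ← ENNReal.ofReal_tsum_of_nonneg (fun k => by positivity) hgeom.summable,
          hgeom.tsum_eq, ← ENNReal.ofReal_mul (by positivity),
          ← ENNReal.ofReal_mul (Real.log_natCast_nonneg q)]
    _ ≤ ENNReal.ofReal (4 * (q : ℝ) ^ (1 / 4 : ℝ) * ((q : ℝ)⁻¹ ^ m * 2)) := by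
        have := inv_nonneg.mpr (show 0 ≤ 1 - (q : ℝ)⁻¹ by linarith)
        gcongr
        exact log_le_four_mul_rpow hq0.le
    _ = _ := by
        rw [Real.rpow_sub hq0, Real.rpow_natCast, inv_pow, div_eq_mul_inv]
        ring_nf

/-- The contribution `∑ log q · q^(-(k+1)s)` of the powers of one prime of norm `q` to
`-ζ'(s)/ζ(s)`. -/
noncomputable def primePowerLogSum (q : ℕ) (s : ℝ) : ℝ≥0∞ :=
  ∑' k : ℕ, ENNReal.ofReal (Real.log q) * invPow s (q ^ (k + 1))

lemma primePowerLogSum_le {s : ℝ} (hs : 1 < s) {p : ℕ} (hp : 2 ≤ p) :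
    primePowerLogSum p s
      ≤ ENNReal.ofReal (Real.log p) * invPow s p + ENNReal.ofReal (8 * (p : ℝ) ^ (-3 / 2 : ℝ)) := by
  have hp' : (1 : ℝ) ≤ p := by exact_mod_cast one_le_two.trans hp
  rw [primePowerLogSum, tsum_eq_zero_add' ENNReal.summable, zero_add, pow_one]
  gcongr
  refine (tsum_log_mul_invPow_pow_le hs hp 2).trans (ENNReal.ofReal_le_ofReal ?_)
  gcongr
  norm_num

lemma primePowerLogSum_pow_le {s : ℝ} (hs : 1 < s) {p f : ℕ} (hp : 2 ≤ p) (hf : 2 ≤ f) :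
    primePowerLogSum (p ^ f) s ≤ ENNReal.ofReal (8 * (p : ℝ) ^ (-3 / 2 : ℝ)) := by
  have hp' : (1 : ℝ) ≤ p := by exact_mod_cast one_le_two.trans hp
  have hf' : (2 : ℝ) ≤ f := by exact_mod_cast hf
  have hpf : 2 ≤ p ^ f := hp.trans (Nat.le_self_pow (by omega) p)
  refine (tsum_log_mul_invPow_pow_le hs hpf 1).trans (ENNReal.ofReal_le_ofReal ?_)
  rw [Nat.cast_pow, ← Real.rpow_natCast, ← Real.rpow_mul (by positivity)]
  gcongr
  push_cast
  linarith

lemma tsum_rpow_neg_three_halves_ne_top :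
    ∑' p : ℕ, ENNReal.ofReal (8 * (p : ℝ) ^ (-3 / 2 : ℝ)) ≠ ⊤ := by
  have hsum : Summable fun p : ℕ => 8 * (p : ℝ) ^ (-3 / 2 : ℝ) :=
    (Real.summable_nat_rpow.mpr (by norm_num)).mul_left 8
  exact hsum.tsum_ofReal_ne_top

lemma tsum_comp_le_of_encard_fiber_le {α β : Type*} (f : α → β) {D : ℕ}
    (hf : ∀ b, (f ⁻¹' {b}).encard ≤ D) (g : β → ℝ≥0∞) :
    ∑' a, g (f a) ≤ D * ∑' b, g b := by
  rw [← (Equiv.sigmaFiberEquiv f).tsum_eq, ENNReal.tsum_sigma', ← ENNReal.tsum_mul_left]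
  refine ENNReal.tsum_le_tsum fun b => ?_
  have hconst (x : {a // f a = b}) : g (f (Equiv.sigmaFiberEquiv f ⟨b, x⟩)) = g b := congrArg g x.2
  simp only [hconst]
  rw [ENNReal.tsum_const]
  gcongr
  exact_mod_cast hf b

end PrimePowers

section IdealNorms

lemma tsum_ite_dvd {M : Type*} [MonoidWithZero M] [IsLeftCancelMulZero M] {a : M} (ha : a ≠ 0)
    [DecidablePred (a ∣ ·)] (g : M → ℝ≥0∞) :
    ∑' b, (if a ∣ b then g b else 0) = ∑' c, g (a * c) := by
  have hinj : Function.Injective (a * ·) := mul_right_injective₀ ha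
  rw [← hinj.tsum_eq]
  · simp
  · intro b hb
    by_contra hrange
    exact hb (if_neg fun ⟨c, hc⟩ => hrange ⟨c, hc.symm⟩)

variable (E : Type*) [Field E] [NumberField E]

open Classical in
lemma log_absNorm_le_tsum {I : Ideal (𝓞 E)} (hI : I ≠ ⊥) :
    ENNReal.ofReal (Real.log (Ideal.absNorm I)) ≤
      ∑' (v : HeightOneSpectrum (𝓞 E)) (k : ℕ), if v.asIdeal ^ (k + 1) ∣ I then
        ENNReal.ofReal (Real.log (Ideal.absNorm v.asIdeal)) else 0 := by
  induction I using UniqueFactorizationMonoid.induction_on_prime with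
  | h₁ => exact absurd rfl hI
  | h₂ I hunit => simp [Ideal.isUnit_iff.mp hunit]
  | h₃ I P hI0 hP ih =>
    let w : HeightOneSpectrum (𝓞 E) := ⟨P, Ideal.isPrime_of_prime hP, hP.ne_zero⟩
    have hNP : (Ideal.absNorm P : ℝ) ≠ 0 := by
      simpa [Ideal.absNorm_eq_zero_iff] using hP.ne_zero
    have hNI : (Ideal.absNorm I : ℝ) ≠ 0 := by simpa [Ideal.absNorm_eq_zero_iff] using hI0
    rw [map_mul, Nat.cast_mul, Real.log_mul hNP hNI,
      ENNReal.ofReal_add (Real.log_natCast_nonneg _) (Real.log_natCast_nonneg _),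
      ← tsum_ite_eq w fun v => ENNReal.ofReal (Real.log (Ideal.absNorm v.asIdeal))]
    refine (add_le_add_right (ih hI0) _).trans ?_
    rw [← ENNReal.tsum_add]
    refine ENNReal.tsum_le_tsum fun v => ?_
    rcases eq_or_ne v w with rfl | hvw
    · simp only [if_true, w, pow_succ' P, mul_dvd_mul_iff_left hP.ne_zero]
      conv_rhs => rw [tsum_eq_zero_add' ENNReal.summable]
      simp [pow_succ' P]
    · rw [if_neg hvw, zero_add]
      gcongr with k
      split_ifs with hdvd hdvd'
      · rfl
      · exact absurd (hdvd.mul_left P) hdvd'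
      · simp
      · rfl

/-- `-ζ_E'(s)/ζ_E(s)`, as a sum over the prime ideals. -/
noncomputable def idealLogSum (s : ℝ) : ℝ≥0∞ :=
  ∑' v : HeightOneSpectrum (𝓞 E), primePowerLogSum (Ideal.absNorm v.asIdeal) s

lemma logZetaSum_absNorm_le {s : ℝ} (hs : 1 < s) :
    logZetaSum (Ideal.absNorm : Ideal (𝓞 E) → ℕ) s
      ≤ zetaSum (Ideal.absNorm : Ideal (𝓞 E) → ℕ) s * idealLogSum E s := by
  classical
  calc logZetaSum (Ideal.absNorm : Ideal (𝓞 E) → ℕ) s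
      ≤ ∑' (I : Ideal (𝓞 E)) (v : HeightOneSpectrum (𝓞 E)) (k : ℕ),
          if v.asIdeal ^ (k + 1) ∣ I then
            ENNReal.ofReal (Real.log (Ideal.absNorm v.asIdeal)) * invPow s (Ideal.absNorm I)
          else 0 := by
        refine ENNReal.tsum_le_tsum fun I => ?_
        rcases eq_or_ne I ⊥ with rfl | hI
        · simp [invPow_zero hs]
        · refine (mul_le_mul_left (log_absNorm_le_tsum E hI) _).trans_eq ?_
          simp only [← ENNReal.tsum_mul_right, ite_mul, zero_mul]
    _ = ∑' (v : HeightOneSpectrum (𝓞 E)) (k : ℕ) (J : Ideal (𝓞 E)),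
          ENNReal.ofReal (Real.log (Ideal.absNorm v.asIdeal))
            * invPow s (Ideal.absNorm (v.asIdeal ^ (k + 1) * J)) := by
        rw [ENNReal.tsum_comm]
        refine tsum_congr fun v => ?_
        rw [ENNReal.tsum_comm]
        exact tsum_congr fun k => tsum_ite_dvd (pow_ne_zero _ v.ne_bot) _
    _ = _ := by
        simp only [map_mul, map_pow, invPow_mul, idealLogSum, primePowerLogSum, zetaSum,
          ← mul_assoc, ENNReal.tsum_mul_left, ENNReal.tsum_mul_right]
        rw [mul_comm]

theorem eventually_one_le_idealLogSum :
    ∀ᶠ s in 𝓝[>] 1, 1 ≤ ENNReal.ofReal (3 * (s - 1)) * idealLogSum E s := by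
  have hpole := hasSimplePoleAtOne_dedekindZeta E
  filter_upwards [hpole.zetaSum_le_logZetaSum, hpole.eventually_ne_zero_and_ne_top,
    self_mem_nhdsWithin] with s hle ⟨hne, hfinite⟩ hs
  refine (ENNReal.mul_le_mul_iff_right hne hfinite).mp ?_
  calc zetaSum Ideal.absNorm s * 1 ≤ ENNReal.ofReal (3 * (s - 1)) * logZetaSum Ideal.absNorm s := by
        rwa [mul_one]
    _ ≤ ENNReal.ofReal (3 * (s - 1)) * (zetaSum Ideal.absNorm s * idealLogSum E s) := by
        gcongr
        exact logZetaSum_absNorm_le E hs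
    _ = _ := by ring

end IdealNorms

section SplitPrimes

/-- The primes `p > B` modulo which the ring `R` has a point. For the ring of integers of a number
field these are the primes above `B` having a prime factor of residue degree one. -/
def splitPrimes (R : Type*) [CommRing R] (B : ℕ) : Set ℕ :=
  {p | p.Prime ∧ B < p ∧ Nonempty (R →+* ZMod p)}

/-- The series `∑ log p · p⁻ˢ` over a set of primes. -/
noncomputable def primeLogSum (S : Set ℕ) (s : ℝ) : ℝ≥0∞ :=
  ∑' p : S, ENNReal.ofReal (Real.log (p : ℕ)) * invPow s p

variable {E : Type*} [Field E] [NumberField E]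

lemma encard_heightOneSpectrum_natCast_mem_le {p : ℕ} (hp : p.Prime) :
    {v : HeightOneSpectrum (𝓞 E) | (p : 𝓞 E) ∈ v.asIdeal}.encard ≤ Module.finrank ℚ E := by
  by_contra! hlt
  obtain ⟨t, ht, hcard⟩ := Set.exists_subset_encard_eq (Order.add_one_le_of_lt hlt)
  lift t to Finset (HeightOneSpectrum (𝓞 E)) using
    Set.finite_of_encard_eq_coe (k := Module.finrank ℚ E + 1) (by exact_mod_cast hcard)
  replace hcard : t.card = Module.finrank ℚ E + 1 := by
    rw [Set.encard_coe_eq_coe_finsetCard] at hcard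
    exact_mod_cast hcard
  have hdvd : ∏ v ∈ t, v.asIdeal ∣ Ideal.span {(p : 𝓞 E)} := by
    let asIdeal : HeightOneSpectrum (𝓞 E) ↪ Ideal (𝓞 E) :=
      ⟨HeightOneSpectrum.asIdeal, fun _ _ => HeightOneSpectrum.ext⟩
    refine (Finset.prod_map t asIdeal id).symm.dvd.trans (Finset.prod_primes_dvd _ ?_ ?_)
    · exact Finset.forall_mem_map.mpr fun v _ => v.prime
    · exact Finset.forall_mem_map.mpr fun v hv => Ideal.dvd_span_singleton.mpr (ht hv)
  have hnorm : ∏ v ∈ t, Ideal.absNorm v.asIdeal ∣ p ^ Module.finrank ℚ E := by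
    rw [← map_prod, ← RingOfIntegers.rank, ← Ideal.absNorm_span_natCast]
    exact map_dvd Ideal.absNorm hdvd
  have hp_le : ∀ v ∈ t, p ≤ Ideal.absNorm v.asIdeal := fun v hv => by
    obtain ⟨f, -, hf⟩ := (Nat.dvd_prime_pow hp).mp ((Finset.dvd_prod_of_mem _ hv).trans hnorm)
    have hf0 : f ≠ 0 := by
      rintro rfl
      exact v.isPrime.ne_top (Ideal.absNorm_eq_one_iff.mp hf)
    exact hf ▸ Nat.le_self_pow hf0 p
  have := (Finset.pow_card_le_prod _ _ p hp_le).trans (Nat.le_of_dvd (pow_pos hp.pos _) hnorm)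
  rw [hcard, Nat.pow_le_pow_iff_right hp.one_lt] at this
  omega

lemma nonempty_ringHom_zmod_of_absNorm {R : Type*} [CommRing R] [IsDedekindDomain R]
    [Module.Free ℤ R] {P : Ideal R} {p : ℕ} (hp : p.Prime) (hP : Ideal.absNorm P = p) :
    Nonempty (R →+* ZMod p) := by
  have hcard : Nat.card (R ⧸ P) = p := by
    rw [← hP, Ideal.absNorm_apply, Submodule.cardQuot_apply]
  have : Finite (R ⧸ P) := Nat.finite_of_card_ne_zero (hcard.trans_ne hp.ne_zero)
  have := Fintype.ofFinite (R ⧸ P)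
  let e := ZMod.ringEquivOfPrime (R ⧸ P) hp (Nat.card_eq_fintype_card.symm.trans hcard)
  exact ⟨(e.symm : R ⧸ P →+* ZMod p).comp (Ideal.Quotient.mk P)⟩

/-- A bound, independent of `s > 1`, for the difference between the contribution to `idealLogSum`
of a prime ideal above `p` and the term of `primeLogSum` at `p`. -/
noncomputable def primeLogError (B p : ℕ) : ℝ≥0∞ :=
  (Set.Iic B).indicator (fun p : ℕ => ENNReal.ofReal (Real.log p)) p
    + ENNReal.ofReal (8 * (p : ℝ) ^ (-3 / 2 : ℝ))

lemma tsum_primeLogError_ne_top (B : ℕ) : ∑' p, primeLogError B p ≠ ⊤ := by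
  unfold primeLogError
  rw [ENNReal.tsum_add, ← tsum_subtype, ENNReal.add_ne_top]
  refine ⟨?_, tsum_rpow_neg_three_halves_ne_top⟩
  rw [tsum_fintype]
  exact ENNReal.sum_ne_top.mpr fun _ _ => ofReal_ne_top

lemma invPow_le_one {s : ℝ} (hs : 1 < s) (n : ℕ) : invPow s n ≤ 1 := by
  rcases eq_or_ne n 0 with rfl | hn
  · simp [invPow_zero hs]
  · refine (invPow_le_inv hs hn).trans ?_
    simpa using inv_le_one_of_one_le₀ (by exact_mod_cast Nat.one_le_iff_ne_zero.mpr hn)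

lemma primePowerLogSum_absNorm_le (B : ℕ) {s : ℝ} (hs : 1 < s) {v : HeightOneSpectrum (𝓞 E)}
    {p f : ℕ} (hp : p.Prime) (hf : 0 < f) (hv : Ideal.absNorm v.asIdeal = p ^ f) :
    primePowerLogSum (Ideal.absNorm v.asIdeal) s
      ≤ (splitPrimes (𝓞 E) B).indicator (fun p => ENNReal.ofReal (Real.log p) * invPow s p) p
        + primeLogError B p := by
  unfold primeLogError
  rw [hv]
  obtain rfl | hf2 : f = 1 ∨ 2 ≤ f := by omega
  · rw [pow_one] at hv ⊢
    refine (primePowerLogSum_le hs hp.two_le).trans ?_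
    rw [← add_assoc]
    gcongr
    by_cases hB : p ≤ B
    · rw [Set.indicator_of_mem (Set.mem_Iic.mpr hB)]
      exact (mul_le_of_le_one_right' (invPow_le_one hs p)).trans le_add_self
    · have hsplit : p ∈ splitPrimes (𝓞 E) B :=
        ⟨hp, not_le.mp hB, nonempty_ringHom_zmod_of_absNorm hp hv⟩
      rw [Set.indicator_of_mem hsplit]
      exact le_self_add
  · exact ((primePowerLogSum_pow_le hs hp.two_le hf2).trans le_add_self).trans le_add_self

lemma idealLogSum_le (B : ℕ) {s : ℝ} (hs : 1 < s) :
    idealLogSum E s ≤ Module.finrank ℚ E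
      * (primeLogSum (splitPrimes (𝓞 E) B) s + ∑' p, primeLogError B p) := by
  have hnorm (v : HeightOneSpectrum (𝓞 E)) :=
    have := v.isMaximal
    Ideal.exists_prime_and_absNorm_eq_pow v.asIdeal
  choose p f hf hmem hp hpow using hnorm
  have hfiber (q : ℕ) : (p ⁻¹' {q}).encard ≤ Module.finrank ℚ E := by
    by_cases hq : q.Prime
    · refine (Set.encard_mono ?_).trans (encard_heightOneSpectrum_natCast_mem_le (E := E) hq)
      rintro v rfl
      exact hmem v
    · rw [Set.eq_empty_of_forall_notMem (s := p ⁻¹' {q}) fun v hv => hq (hv ▸ hp v)]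
      simp
  refine (ENNReal.tsum_le_tsum fun v =>
    primePowerLogSum_absNorm_le B hs (hp v) (hf v) (hpow v)).trans ?_
  refine (tsum_comp_le_of_encard_fiber_le p hfiber fun q => _ + primeLogError B q).trans_eq ?_
  rw [ENNReal.tsum_add, ← tsum_subtype, primeLogSum]

variable (E)

theorem eventually_one_le_primeLogSum_splitPrimes (B : ℕ) :
    ∀ᶠ s in 𝓝[>] 1, 1 ≤ ENNReal.ofReal (4 * (s - 1))
      * (Module.finrank ℚ E * primeLogSum (splitPrimes (𝓞 E) B) s) := by
  set C : ℝ≥0∞ := Module.finrank ℚ E * ∑' p, primeLogError B p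
  have hC : C ≠ ⊤ := ENNReal.mul_ne_top (by simp) (tsum_primeLogError_ne_top B)
  have hsmall : Tendsto (fun s : ℝ => ENNReal.ofReal (3 * (s - 1)) * C) (𝓝[>] 1) (𝓝 0) := by
    have hcont : Continuous fun s : ℝ => ENNReal.ofReal (3 * (s - 1)) :=
      ENNReal.continuous_ofReal.comp (by fun_prop)
    have := ENNReal.Tendsto.mul_const (hcont.tendsto 1) (.inr hC)
    simpa using this.mono_left nhdsWithin_le_nhds
  filter_upwards [eventually_one_le_idealLogSum E,
    hsmall.eventually_le_const (u := ENNReal.ofReal (1 / 4)) (by simp), self_mem_nhdsWithin]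
    with s hone hsmall hs
  set L := Module.finrank ℚ E * primeLogSum (splitPrimes (𝓞 E) B) s
  have hsum : ENNReal.ofReal (3 / 4) + ENNReal.ofReal (1 / 4)
      ≤ ENNReal.ofReal (3 * (s - 1)) * L + ENNReal.ofReal (1 / 4) := by
    calc ENNReal.ofReal (3 / 4) + ENNReal.ofReal (1 / 4) = 1 := by
          rw [← ENNReal.ofReal_add (by norm_num) (by norm_num)]
          norm_num
      _ ≤ ENNReal.ofReal (3 * (s - 1)) * idealLogSum E s := hone
      _ ≤ ENNReal.ofReal (3 * (s - 1)) * (L + C) := by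
          gcongr
          exact (idealLogSum_le B hs).trans_eq (mul_add _ _ _)
      _ ≤ _ := by
          rw [mul_add]
          gcongr
  calc (1 : ℝ≥0∞) = ENNReal.ofReal (4 / 3) * ENNReal.ofReal (3 / 4) := by
        rw [← ENNReal.ofReal_mul (by norm_num)]
        norm_num
    _ ≤ ENNReal.ofReal (4 / 3) * (ENNReal.ofReal (3 * (s - 1)) * L) := by
        gcongr
        exact (ENNReal.add_le_add_iff_right ofReal_ne_top).mp hsum
    _ = _ := by
        rw [← mul_assoc, ← ENNReal.ofReal_mul (by norm_num)]
        ring_nf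

end SplitPrimes

section ShiftedPrimes

lemma dvd_sub_one_of_isPrimitiveRoot {R : Type*} [CommRing R] [IsDomain R] {m p : ℕ} [Fact p.Prime]
    {ζ : R} (hζ : IsPrimitiveRoot ζ m) (hm : 0 < m) (hpm : ¬ p ∣ m) (f : R →+* ZMod p) :
    m ∣ p - 1 := by
  have : NeZero (m : ZMod p) := ⟨by rwa [Ne, ZMod.natCast_eq_zero_iff]⟩
  have hroot : IsPrimitiveRoot (f ζ) m := by
    rw [← Polynomial.isRoot_cyclotomic_iff, ← Polynomial.map_cyclotomic m f]
    exact (hζ.isRoot_cyclotomic hm).map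
  rw [hroot.eq_orderOf]
  exact ZMod.orderOf_dvd_card_sub_one (hroot.isUnit hm.ne').ne_zero

lemma finrank_cyclotomicField_le (F : Type*) [Field F] (m : ℕ) [NeZero (m : F)] [NeZero m] :
    Module.finrank F (CyclotomicField m F) ≤ m.totient := by
  have hζ := IsCyclotomicExtension.zeta_spec m F (CyclotomicField m F)
  have hdvd : minpoly F (IsCyclotomicExtension.zeta m F (CyclotomicField m F)) ∣
      Polynomial.cyclotomic m F := by
    apply minpoly.dvd
    rw [Polynomial.aeval_def, ← Polynomial.eval_map, Polynomial.map_cyclotomic]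
    exact hζ.isRoot_cyclotomic (NeZero.pos m)
  rw [(hζ.powerBasis F).finrank, IsPrimitiveRoot.powerBasis_dim,
    ← Polynomial.natDegree_cyclotomic m F]
  exact Polynomial.natDegree_le_of_dvd hdvd (Polynomial.cyclotomic_ne_zero _ _)

lemma splitPrimes_cyclotomicField_subset (F : Type*) [Field F] [CharZero F] (B : ℕ) {m : ℕ}
    (hm : 0 < m) :
    splitPrimes (𝓞 (CyclotomicField m F)) (max B m) ⊆ {p ∈ splitPrimes (𝓞 F) B | m ∣ p - 1} := by
  rintro p ⟨hp, hlt, ⟨f⟩⟩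
  have : Fact p.Prime := ⟨hp⟩
  have : NeZero m := ⟨hm.ne'⟩
  have hlt' := max_lt_iff.mp hlt
  have hζ := (IsCyclotomicExtension.zeta_spec m F (CyclotomicField m F)).toInteger_isPrimitiveRoot
  exact ⟨⟨hp, hlt'.1, ⟨f.comp (algebraMap (𝓞 F) (𝓞 (CyclotomicField m F)))⟩⟩,
    dvd_sub_one_of_isPrimitiveRoot hζ hm (Nat.not_dvd_of_pos_of_lt hm hlt'.2) f⟩

lemma primeLogSum_mono {S S' : Set ℕ} (h : S ⊆ S') (s : ℝ) : primeLogSum S s ≤ primeLogSum S' s :=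
  ENNReal.tsum_mono_subtype (fun p : ℕ => ENNReal.ofReal (Real.log p) * invPow s p) h

lemma totient_le_mul_exp (m : ℕ) :
    (m.totient : ℝ) ≤ m * Real.exp (-∑ p ∈ m.primeFactors, (1 / p : ℝ)) := by
  have h := congrArg (Rat.cast : ℚ → ℝ) (Nat.totient_eq_mul_prod_factors m)
  push_cast at h
  rw [h, ← Finset.sum_neg_distrib, Real.exp_sum]
  gcongr with p
  · intro p _
    exact sub_nonneg.mpr (Nat.cast_inv_le_one p)
  · simpa [sub_eq_neg_add] using Real.add_one_le_exp (-(p : ℝ)⁻¹)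

lemma exists_mul_totient_lt (c : ℕ) : ∃ m, 0 < m ∧ c * m.totient < m := by
  obtain ⟨t, ht⟩ : ∃ t : Finset Nat.Primes, (c : ℝ) < ∑ p ∈ t, (1 / p : ℝ) := by
    by_contra! h
    exact Nat.Primes.not_summable_one_div (summable_of_sum_le (fun p => by positivity) h)
  let coe : Nat.Primes ↪ ℕ := ⟨(↑), Nat.Primes.coe_nat_injective⟩
  set m := ∏ p ∈ t.map coe, p
  have hprime : ∀ p ∈ t.map coe, p.Prime :=
    Finset.forall_mem_map.mpr fun p _ => p.2
  have hm : 0 < m := Finset.prod_pos fun p hp => (hprime p hp).pos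
  have hsum : ∑ p ∈ m.primeFactors, (1 / p : ℝ) = ∑ p ∈ t, (1 / p : ℝ) := by
    rw [Nat.primeFactors_prod hprime, Finset.sum_map]
    rfl
  have hexp : (c : ℝ) < Real.exp (∑ p ∈ t, (1 / p : ℝ)) := by
    linarith [Real.add_one_le_exp (∑ p ∈ t, (1 / p : ℝ))]
  refine ⟨m, hm, ?_⟩
  rify
  calc (c : ℝ) * m.totient
      < Real.exp (∑ p ∈ t, (1 / p : ℝ)) * m.totient := by
        gcongr
    _ ≤ Real.exp (∑ p ∈ t, (1 / p : ℝ)) * (m * Real.exp (-∑ p ∈ t, (1 / p : ℝ))) := by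
        gcongr
        exact hsum ▸ totient_le_mul_exp m
    _ = m := by
        rw [mul_left_comm, ← Real.exp_add, add_neg_cancel, Real.exp_zero, mul_one]

/-- `S` contains few primes `p` with `p - 1` dividing a given `T`: the product of any number of them
is at most `T ^ A`. -/
def HasSmallShiftedProducts (S : Set ℕ) (A : ℕ) : Prop :=
  ∀ P : Finset ℕ, ↑P ⊆ S → ∀ T, 0 < T → (∀ p ∈ P, p - 1 ∣ T) → ∏ p ∈ P, p ≤ T ^ A

variable {S : Set ℕ} {A m : ℕ}

open Classical in
lemma HasSmallShiftedProducts.tsum_log_le (h : HasSmallShiftedProducts S A) (hS : ∀ p ∈ S, p.Prime)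
    {T : ℕ} (hT : 0 < T) :
    ∑' p : S, (if (p : ℕ) - 1 ∣ T then ENNReal.ofReal (Real.log (p : ℕ)) else 0)
      ≤ A * ENNReal.ofReal (Real.log T) := by
  rw [ENNReal.tsum_eq_iSup_sum]
  refine iSup_le fun P => ?_
  rw [← Finset.sum_filter]
  set P' : Finset ℕ :=
    (P.filter fun p : S => (p : ℕ) - 1 ∣ T).map (Function.Embedding.subtype (· ∈ S))
  have hP' : (P' : Set ℕ) ⊆ S := fun p hp => by
    obtain ⟨q, -, rfl⟩ := Finset.mem_map.mp hp
    exact q.2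
  have hprod : ∏ p ∈ P', p ≤ T ^ A := h P' hP' T hT <| Finset.forall_mem_map.mpr fun p hp =>
    (Finset.mem_filter.mp hp).2
  have hpos : 0 < ∏ p ∈ P', p := Finset.prod_pos fun p hp => (hS p (hP' hp)).pos
  calc ∑ p ∈ P.filter fun p : S => (p : ℕ) - 1 ∣ T, ENNReal.ofReal (Real.log (p : ℕ))
      = ENNReal.ofReal (Real.log (∏ p ∈ P', p : ℕ)) := by
        rw [Nat.cast_prod, Real.log_prod fun p hp => by exact_mod_cast (hS p (hP' hp)).ne_zero,
          ENNReal.ofReal_sum_of_nonneg fun p _ => Real.log_natCast_nonneg p, Finset.sum_map]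
        rfl
    _ ≤ ENNReal.ofReal (Real.log (T ^ A : ℕ)) :=
        ENNReal.ofReal_le_ofReal <|
          Real.log_le_log (by exact_mod_cast hpos) (by exact_mod_cast hprod)
    _ = A * ENNReal.ofReal (Real.log T) := by
        rw [Nat.cast_pow, Real.log_pow, ENNReal.ofReal_mul (by positivity), ENNReal.ofReal_natCast]

lemma natCast_mul_invPow_le {s : ℝ} (hs : 1 < s) (hm : 0 < m) : m * invPow s m ≤ 1 := by
  calc (m : ℝ≥0∞) * invPow s m ≤ ENNReal.ofReal m * ENNReal.ofReal (m : ℝ)⁻¹ := by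
        rw [ENNReal.ofReal_natCast]
        gcongr
        exact (invPow_le_inv hs hm.ne')
    _ = 1 := by
        rw [← ENNReal.ofReal_mul (by positivity), mul_inv_cancel₀ (by positivity),
          ENNReal.ofReal_one]

open Classical in
/-- The multiples of `(p - 1) / m` form a set of density `m / (p - 1)`, and they are the `T` with
`p - 1 ∣ m * T`. -/
lemma mul_invPow_mul_zetaSum_le {s : ℝ} (hs : 1 < s) (hm : 0 < m) {p : ℕ} (hp : 1 < p)
    (hmp : m ∣ p - 1) :
    m * (invPow s p * zetaSum id s) ≤ ∑' T, if p - 1 ∣ m * T then invPow s T else 0 := by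
  obtain ⟨q, hq⟩ := hmp
  have hq0 : q ≠ 0 := by
    rintro rfl
    omega
  have hpq : invPow s p ≤ invPow s (m * q) := by
    refine ENNReal.ofReal_le_ofReal (Real.rpow_le_rpow_of_nonpos ?_ ?_ (by linarith))
    · exact_mod_cast hq ▸ Nat.sub_pos_of_lt hp
    · exact_mod_cast hq ▸ Nat.sub_le p 1
  calc (m : ℝ≥0∞) * (invPow s p * zetaSum id s)
      ≤ m * (invPow s (m * q) * zetaSum id s) := by gcongr
    _ = m * invPow s m * (invPow s q * zetaSum id s) := by
        rw [invPow_mul]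
        ring
    _ ≤ invPow s q * zetaSum id s := mul_le_of_le_one_left' (natCast_mul_invPow_le hs hm)
    _ = ∑' T, if q ∣ T then invPow s T else 0 := by
        rw [tsum_ite_dvd hq0, zetaSum, ← ENNReal.tsum_mul_left]
        simp only [invPow_mul, id]
    _ = _ := by simp only [hq, Nat.mul_dvd_mul_iff_left hm]

lemma HasSmallShiftedProducts.mul_zetaSum_mul_primeLogSum_le (h : HasSmallShiftedProducts S A)
    (hS : ∀ p ∈ S, p.Prime) (hm : 0 < m) (hmS : ∀ p ∈ S, m ∣ p - 1) {s : ℝ} (hs : 1 < s) :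
    m * (zetaSum id s * primeLogSum S s)
      ≤ A * (ENNReal.ofReal (Real.log m) * zetaSum id s + logZetaSum id s) := by
  classical
  have hterm (T : ℕ) : A * ENNReal.ofReal (Real.log (m * T : ℕ)) * invPow s T
      = A * (ENNReal.ofReal (Real.log m) * invPow s T
        + ENNReal.ofReal (Real.log T) * invPow s T) := by
    rcases eq_or_ne T 0 with rfl | hT
    · simp [invPow_zero hs]
    · rw [Nat.cast_mul, Real.log_mul (by positivity) (by positivity),
        ENNReal.ofReal_add (Real.log_natCast_nonneg m) (Real.log_natCast_nonneg T)]
      ring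
  calc m * (zetaSum id s * primeLogSum S s)
      = ∑' p : S, ENNReal.ofReal (Real.log (p : ℕ)) * (m * (invPow s p * zetaSum id s)) := by
        rw [primeLogSum, ← ENNReal.tsum_mul_left, ← ENNReal.tsum_mul_left]
        exact tsum_congr fun p => by ring
    _ ≤ ∑' p : S, ENNReal.ofReal (Real.log (p : ℕ))
          * ∑' T, if (p : ℕ) - 1 ∣ m * T then invPow s T else 0 :=
        ENNReal.tsum_le_tsum fun p => by
          gcongr
          exact mul_invPow_mul_zetaSum_le hs hm (hS p p.2).one_lt (hmS p p.2)
    _ = ∑' T, (∑' p : S, if (p : ℕ) - 1 ∣ m * T then ENNReal.ofReal (Real.log (p : ℕ)) else 0)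
          * invPow s T := by
        simp only [← ENNReal.tsum_mul_left, ← ENNReal.tsum_mul_right, mul_ite, ite_mul, mul_zero,
          zero_mul]
        exact ENNReal.tsum_comm
    _ ≤ ∑' T : ℕ, A * ENNReal.ofReal (Real.log (m * T : ℕ)) * invPow s T :=
        ENNReal.tsum_le_tsum fun T => by
          rcases eq_or_ne T 0 with rfl | hT
          · simp [invPow_zero hs]
          · gcongr
            exact h.tsum_log_le hS (by positivity)
    _ = A * (ENNReal.ofReal (Real.log m) * zetaSum id s + logZetaSum id s) := by
        simp only [hterm, ENNReal.tsum_mul_left, ENNReal.tsum_add]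
        rfl

theorem HasSmallShiftedProducts.eventually_mul_primeLogSum_le (h : HasSmallShiftedProducts S A)
    (hS : ∀ p ∈ S, p.Prime) (hm : 0 < m) (hmS : ∀ p ∈ S, m ∣ p - 1) :
    ∀ᶠ s in 𝓝[>] 1, m * (ENNReal.ofReal (4 * (s - 1)) * primeLogSum S s) ≤ 21 * A := by
  have hlim : Tendsto (fun s : ℝ => 4 * (s - 1) * Real.log m) (𝓝[>] 1) (𝓝 0) := by
    have : Continuous fun s : ℝ => 4 * (s - 1) * Real.log m := by fun_prop
    simpa using (this.tendsto 1).mono_left nhdsWithin_le_nhds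
  filter_upwards [hasSimplePoleAtOne_riemannZeta.logZetaSum_le_zetaSum,
    hasSimplePoleAtOne_riemannZeta.eventually_ne_zero_and_ne_top, hlim.eventually_le_const one_pos,
    self_mem_nhdsWithin] with s hL ⟨hζ0, hζtop⟩ hlog hs
  replace hs : 1 < s := hs
  set ζ := zetaSum id s
  refine (ENNReal.mul_le_mul_iff_left hζ0 hζtop).mp ?_
  calc m * (ENNReal.ofReal (4 * (s - 1)) * primeLogSum S s) * ζ
      = ENNReal.ofReal (4 * (s - 1)) * (m * (ζ * primeLogSum S s)) := by ring
    _ ≤ ENNReal.ofReal (4 * (s - 1))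
          * (A * (ENNReal.ofReal (Real.log m) * ζ + logZetaSum id s)) := by
        gcongr _ * ?_
        exact h.mul_zetaSum_mul_primeLogSum_le hS hm hmS hs
    _ = A * (ENNReal.ofReal (4 * (s - 1) * Real.log m) * ζ
          + 4 * (ENNReal.ofReal (s - 1) * logZetaSum id s)) := by
        rw [ENNReal.ofReal_mul (p := 4 * (s - 1)) (by linarith), ENNReal.ofReal_mul (by norm_num),
          ENNReal.ofReal_ofNat]
        ring
    _ ≤ A * (1 * ζ + 4 * (5 * ζ)) := by
        gcongr
        simpa using hlog
    _ = 21 * A * ζ := by ring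

-- Adjoining the `m`-th roots of unity to `F` divides the density of the split primes by at most
-- `φ m`, but it makes `m` divide each `p - 1`. The two effects cancel up to the factor `φ m / m`,
-- which can be made arbitrarily small.
theorem not_hasSmallShiftedProducts_splitPrimes (F : Type*) [Field F] [NumberField F] (B A : ℕ) :
    ¬ HasSmallShiftedProducts (splitPrimes (𝓞 F) B) A := by
  intro h
  obtain ⟨m, hm, hlt⟩ := exists_mul_totient_lt (Module.finrank ℚ F * (21 * A))
  have : NeZero m := ⟨hm.ne'⟩
  set E := CyclotomicField m F
  have : NumberField E := IsCyclotomicExtension.numberField {m} F E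
  set S := {p ∈ splitPrimes (𝓞 F) B | m ∣ p - 1}
  have hdeg : Module.finrank ℚ E ≤ Module.finrank ℚ F * m.totient := by
    rw [← Module.finrank_mul_finrank ℚ F E]
    gcongr
    exact finrank_cyclotomicField_le F m
  have hS : HasSmallShiftedProducts S A := fun P hP => h P (hP.trans (Set.sep_subset _ _))
  obtain ⟨s, hsplit, hle⟩ := ((eventually_one_le_primeLogSum_splitPrimes E (max B m)).and <|
    hS.eventually_mul_primeLogSum_le (fun p hp => hp.1.1) hm (fun p hp => hp.2)).exists
  have hbound : (m : ℝ≥0∞) ≤ (Module.finrank ℚ F * (21 * A) * m.totient : ℕ) := by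
    calc (m : ℝ≥0∞)
        ≤ m * (ENNReal.ofReal (4 * (s - 1)) * (Module.finrank ℚ E * primeLogSum S s)) := by
          refine le_mul_of_one_le_right' (hsplit.trans ?_)
          gcongr
          exact primeLogSum_mono (splitPrimes_cyclotomicField_subset F B hm) s
      _ = Module.finrank ℚ E * (m * (ENNReal.ofReal (4 * (s - 1)) * primeLogSum S s)) := by ring
      _ ≤ (Module.finrank ℚ F * m.totient : ℕ) * (21 * A) := by gcongr
      _ = _ := by
          push_cast
          ring
  exact absurd (by exact_mod_cast hbound) hlt.not_ge

end ShiftedPrimes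

section Specialization

universe u

variable (R : Type u) [CommRing R] [Algebra.FiniteType ℤ R]

lemma exists_splitPrimes_subset {F : Type*} [Field F] [NumberField F] (f : R →+* F) :
    ∃ B, splitPrimes (𝓞 F) B ⊆ splitPrimes R 0 := by
  obtain ⟨s, hs⟩ := ‹Algebra.FiniteType ℤ R›
  classical
  obtain ⟨⟨N, hN⟩, hint⟩ := IsLocalization.exist_integer_multiples_of_finset (𝓞 F)⁰ (s.image f)
  have hpow : Submonoid.powers N ≤ (𝓞 F)⁰ := Submonoid.powers_le.mpr hN
  let O := Localization.subalgebra F (Submonoid.powers N) hpow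
  have hrange : f.toIntAlgHom.range ≤ O.restrictScalars ℤ := by
    rw [← Algebra.map_top, ← hs, AlgHom.map_adjoin, Algebra.adjoin_le_iff]
    rintro _ ⟨x, hx, rfl⟩
    obtain ⟨a, ha⟩ := hint (f x) (Finset.mem_image_of_mem f hx)
    refine ⟨a, N, Submonoid.mem_powers N, ?_⟩
    rw [IsLocalization.eq_mk'_iff_mul_eq, ha, Algebra.smul_def, mul_comm]
    rfl
  refine ⟨Ideal.absNorm (Ideal.span {N}), fun p ⟨hp, hlt, ⟨ψ⟩⟩ => ⟨hp, hp.pos, ?_⟩⟩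
  have : Fact p.Prime := ⟨hp⟩
  have hψ : IsUnit (ψ N) := by
    have hdvd : N ∣ (Ideal.absNorm (Ideal.span {N}) : 𝓞 F) :=
      Ideal.mem_span_singleton.mp (Ideal.absNorm_mem _)
    refine isUnit_of_dvd_unit (map_dvd ψ hdvd) ?_
    rw [map_natCast, isUnit_iff_ne_zero, Ne, ZMod.natCast_eq_zero_iff]
    refine Nat.not_dvd_of_pos_of_lt (Nat.pos_of_ne_zero ?_) hlt
    rw [Ne, Ideal.absNorm_eq_zero_iff, Ideal.span_singleton_eq_bot]
    exact nonZeroDivisors.ne_zero hN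
  have : IsLocalization.Away N O := Localization.subalgebra.isLocalization_subalgebra ..
  exact ⟨(IsLocalization.Away.lift N hψ).comp
    (f.codRestrict O fun x => hrange ⟨x, rfl⟩)⟩

variable [CharZero R]

lemma exists_ringHom_numberField :
    ∃ (F : Type u) (_ : Field F) (_ : NumberField F), Nonempty (R →+* F) := by
  have hinj : Function.Injective (Algebra.TensorProduct.includeLeft : ℚ →ₐ[ℚ] ℚ ⊗[ℤ] R) :=
    Algebra.TensorProduct.includeLeft_injective (FaithfulSMul.algebraMap_injective ℤ R)
  have := hinj.nontrivial
  obtain ⟨M, hM⟩ := Ideal.exists_maximal (ℚ ⊗[ℤ] R)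
  let _ : Field ((ℚ ⊗[ℤ] R) ⧸ M) := Ideal.Quotient.field M
  have := finite_of_finite_type_of_isJacobsonRing ℚ ((ℚ ⊗[ℤ] R) ⧸ M)
  let φ : R →+* ℚ ⊗[ℤ] R := (Algebra.TensorProduct.includeRight : R →ₐ[ℤ] ℚ ⊗[ℤ] R)
  exact ⟨_, inferInstance, .of_module_finite ℚ ((ℚ ⊗[ℤ] R) ⧸ M),
    ⟨(Ideal.Quotient.mk M).comp φ⟩⟩

lemma nonempty_ringHom_complex : Nonempty (R →+* ℂ) := by
  obtain ⟨F, _, _, ⟨f⟩⟩ := exists_ringHom_numberField R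
  exact ⟨(Classical.arbitrary (F →+* ℂ)).comp f⟩

theorem exists_pow_lt_prod_ringHom_zmod (A : ℕ) :
    ∃ (P : Finset ℕ) (T : ℕ), 0 < T ∧ T ^ A < ∏ p ∈ P, p ∧
      ∀ p ∈ P, p.Prime ∧ p - 1 ∣ T ∧ Nonempty (R →+* ZMod p) := by
  obtain ⟨F, _, _, ⟨f⟩⟩ := exists_ringHom_numberField R
  obtain ⟨B, hB⟩ := exists_splitPrimes_subset R f
  have h := not_hasSmallShiftedProducts_splitPrimes F B A
  unfold HasSmallShiftedProducts at h
  push Not at h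
  obtain ⟨P, hP, T, hT, hdvd, hlt⟩ := h
  exact ⟨P, T, hT, hlt, fun p hp => ⟨(hP hp).1, hdvd p hp, (hB (hP hp)).2.2⟩⟩

end Specialization

section Models

variable {Γ ι A S : Type*} [Group Γ] [Fintype ι] [DecidableEq ι] [CommRing A] [CommRing S]

/-- The matrix `M` is different from the identity because of an entry of `M - 1` that is a unit, so
that it stays different from the identity after any change of the coefficient ring. -/
def HasUnitEntrySubOne (M : GL ι A) : Prop := ∃ i j, IsUnit ((M - 1 : Matrix ι ι A) i j)

lemma HasUnitEntrySubOne.map_ne_one [Nontrivial S] {M : GL ι A} (hM : HasUnitEntrySubOne M)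
    (f : A →+* S) : GeneralLinearGroup.map f M ≠ 1 := by
  intro h
  obtain ⟨i, j, hu⟩ := hM
  have hentry := congrArg (fun N : GL ι S => (N : Matrix ι ι S) i j) h
  refine (hu.map f).ne_zero ?_
  simpa [Matrix.one_apply, apply_ite f, sub_eq_zero] using hentry

lemma hasUnitEntrySubOne_of_ne_one {K : Type*} [Field K] {M : GL ι K} (hM : M ≠ 1) :
    HasUnitEntrySubOne M := by
  by_contra! h
  refine hM (GeneralLinearGroup.ext fun i j => ?_)
  by_contra hij
  exact h ⟨i, j, isUnit_iff_ne_zero.mpr (sub_ne_zero.mpr hij)⟩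

lemma exists_map_val_comp_eq {R : Subalgebra ℤ A} (ρ : Γ →* GL ι A) (hρ : ∀ g i j, ρ g i j ∈ R) :
    ∃ ρR : Γ →* GL ι R, (GeneralLinearGroup.map (R.val : R →+* A)).comp ρR = ρ := by
  let ρM : Γ →* Matrix ι ι R :=
    { toFun g := Matrix.of fun i j => ⟨ρ g i j, hρ g i j⟩
      map_one' := by
        ext i j
        by_cases hij : i = j <;> simp [Matrix.one_apply, hij]
      map_mul' g h := by
        ext i j
        simp [Matrix.mul_apply] }
  refine ⟨ρM.toHomUnits, MonoidHom.ext fun g => GeneralLinearGroup.ext fun i j => ?_⟩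
  rfl

lemma exists_model [Group.FG Γ] (ρ : Γ →* GL ι A) {X : Set Γ} (hfin : X.Finite)
    (hX : ∀ x ∈ X, HasUnitEntrySubOne (ρ x)) :
    ∃ R : Subalgebra ℤ A, Algebra.FiniteType ℤ R ∧ ∃ ρR : Γ →* GL ι R,
      (GeneralLinearGroup.map (R.val : R →+* A)).comp ρR = ρ ∧
        ∀ x ∈ X, HasUnitEntrySubOne (ρR x) := by
  obtain ⟨G, hG⟩ := Monoid.fg_def.mp (Group.fg_iff_monoid_fg.mp ‹Group.FG Γ›)
  let entries := (fun t : Γ × ι × ι => ρ t.1 t.2.1 t.2.2) '' ((G : Set Γ) ×ˢ Set.univ)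
  let inverses := (fun t : Γ × ι × ι => Ring.inverse ((ρ t.1 - 1 : Matrix ι ι A) t.2.1 t.2.2)) ''
    (X ×ˢ Set.univ)
  have hs : (entries ∪ inverses).Finite :=
    ((G.finite_toSet.prod Set.finite_univ).image _).union ((hfin.prod Set.finite_univ).image _)
  let R := Algebra.adjoin ℤ (entries ∪ inverses)
  have hmem (g : Γ) : (ρ g : Matrix ι ι A) ∈ R.matrix (n := ι) := by
    have : Submonoid.closure (G : Set Γ) ≤
        R.matrix.toSubmonoid.comap ((Units.coeHom _).comp ρ) := by
      rw [Submonoid.closure_le]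
      exact fun g hg i j => Algebra.subset_adjoin (.inl ⟨(g, i, j), ⟨hg, trivial⟩, rfl⟩)
    exact this (hG ▸ Submonoid.mem_top g)
  obtain ⟨ρR, hρR⟩ := exists_map_val_comp_eq ρ hmem
  refine ⟨R, R.fg_iff_finiteType.mp (Subalgebra.fg_def.mpr ⟨_, hs, rfl⟩), ρR, hρR,
    fun x hx => ?_⟩
  obtain ⟨i, j, hu⟩ := hX x hx
  refine ⟨i, j, IsUnit.of_mul_eq_one ⟨Ring.inverse ((ρ x - 1 : Matrix ι ι A) i j),
    Algebra.subset_adjoin (.inr ⟨(x, i, j), ⟨hx, trivial⟩, rfl⟩)⟩ (Subtype.ext ?_)⟩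
  refine (congrArg (· * _) ?_).trans (Ring.mul_inverse_cancel _ hu)
  by_cases hij : i = j <;> simp [← hρR, hij]

end Models

section ComplexJordan

lemma pow_eigenvector_apply {R M : Type*} [CommSemiring R] [AddCommMonoid M] [Module R M]
    {f : Module.End R M} {l : R} {v : M} (hv : f v = l • v) (k : ℕ) : (f ^ k) v = l ^ k • v := by
  induction k with
  | zero => simp
  | succ k ih => rw [pow_succ, Module.End.mul_apply, hv, map_smul, ih, smul_smul, pow_succ']

lemma pow_eq_one_of_eigenvector {K V : Type*} [Field K] [AddCommGroup V] [Module K V]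
    {f : Module.End K V} {l : K} {v : V} {d : ℕ} (hv : f v = l • v) (hv0 : v ≠ 0)
    (hfd : f ^ d = 1) : l ^ d = 1 := by
  refine smul_left_injective K hv0 ?_
  simpa [hfd] using (pow_eigenvector_apply hv d).symm

lemma isSemisimple_of_pow_eq_one {K V : Type*} [Field K] [CharZero K] [AddCommGroup V]
    [Module K V] {f : Module.End K V} {d : ℕ} (hd : d ≠ 0) (hfd : f ^ d = 1) :
    f.IsSemisimple :=
  Module.End.isSemisimple_of_squarefree_aeval_eq_zero
    (Polynomial.X_pow_sub_one_separable_iff.mpr (Nat.cast_ne_zero.mpr hd)).squarefree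
    (by simp [hfd])

/-- Averaging `l⁻ᵏ • fᵏ` over the powers of `f` kills the `m`-eigenvector `w`. -/
lemma norm_le_norm_sub_of_eigenvectors {V : Type*} [NormedAddCommGroup V] [NormedSpace ℂ V]
    {f : Module.End ℂ V} (hf : ∀ v, ‖f v‖ = ‖v‖) {d : ℕ} (hd : d ≠ 0) (hfd : f ^ d = 1) {l m : ℂ}
    (hlm : l ≠ m) {v w : V} (hv : f v = l • v) (hw : f w = m • w) : ‖v‖ ≤ ‖v - w‖ := by
  obtain rfl | hv0 := eq_or_ne v 0
  · simp
  obtain rfl | hw0 := eq_or_ne w 0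
  · simp
  have hl : l ^ d = 1 := pow_eq_one_of_eigenvector hv hv0 hfd
  have hm : m ^ d = 1 := pow_eq_one_of_eigenvector hw hw0 hfd
  have hl0 : l ≠ 0 := by
    rintro rfl
    simp [hd] at hl
  have hratio : l⁻¹ * m ≠ 1 := fun h => hlm (eq_of_inv_mul_eq_one h)
  have hgeom : ∑ k ∈ Finset.range d, (l⁻¹ * m) ^ k = 0 := by
    rw [geom_sum_eq hratio, mul_pow, inv_pow, hl, hm]
    simp
  have hterm (k : ℕ) : l⁻¹ ^ k • (f ^ k) (v - w) = v - (l⁻¹ * m) ^ k • w := by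
    rw [map_sub, pow_eigenvector_apply hv, pow_eigenvector_apply hw, smul_sub, smul_smul,
      smul_smul, ← mul_pow, ← mul_pow, inv_mul_cancel₀ hl0, one_pow, one_smul]
  have hsum : ∑ k ∈ Finset.range d, l⁻¹ ^ k • (f ^ k) (v - w) = d • v := by
    simp only [hterm, Finset.sum_sub_distrib, ← Finset.sum_smul, hgeom]
    simp
  have hnorm (k : ℕ) : ‖l⁻¹ ^ k • (f ^ k) (v - w)‖ = ‖v - w‖ := by
    have hfk : ‖(f ^ k) (v - w)‖ = ‖v - w‖ := by
      induction k with
      | zero => simp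
      | succ k ih => rw [pow_succ', Module.End.mul_apply, hf, ih]
    rw [norm_smul, norm_pow, norm_inv, Complex.norm_eq_one_of_pow_eq_one hl hd, inv_one, one_pow,
      one_mul, hfk]
  have hle : d * ‖v‖ ≤ d * ‖v - w‖ :=
    calc d * ‖v‖ = ‖∑ k ∈ Finset.range d, l⁻¹ ^ k • (f ^ k) (v - w)‖ := by
          rw [hsum, ← Nat.cast_smul_eq_nsmul ℂ, norm_smul, Complex.norm_natCast]
      _ ≤ ∑ k ∈ Finset.range d, ‖l⁻¹ ^ k • (f ^ k) (v - w)‖ := norm_sum_le _ _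
      _ = d * ‖v - w‖ := by simp only [hnorm, Finset.sum_const, Finset.card_range, nsmul_eq_mul]
  exact le_of_mul_le_mul_left hle (by positivity)

variable {G V : Type*} [Group G] [NormedAddCommGroup V] [NormedSpace ℂ V] {ρ : G →* V →L[ℂ] V}

lemma norm_le_one_of_isometric (hiso : ∀ g v, ‖ρ g v‖ = ‖v‖) (g : G) : ‖ρ g‖ ≤ 1 :=
  ContinuousLinearMap.opNorm_le_bound _ zero_le_one fun v => by rw [hiso, one_mul]

lemma norm_map_inv_mul_sub_one_le (hiso : ∀ g v, ‖ρ g v‖ = ‖v‖) (g h : G) :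
    ‖ρ (g⁻¹ * h) - 1‖ ≤ ‖ρ g - ρ h‖ :=
  calc ‖ρ (g⁻¹ * h) - 1‖ = ‖ρ g⁻¹ * (ρ h - ρ g)‖ := by
        rw [mul_sub, ← map_mul, ← map_mul, inv_mul_cancel, map_one]
    _ ≤ ‖ρ g⁻¹‖ * ‖ρ h - ρ g‖ := norm_mul_le _ _
    _ ≤ 1 * ‖ρ h - ρ g‖ := by
        gcongr
        exact norm_le_one_of_isometric hiso _
    _ = ‖ρ g - ρ h‖ := by rw [one_mul, norm_sub_rev]

lemma norm_map_commutator_sub_one_le (hiso : ∀ g v, ‖ρ g v‖ = ‖v‖) (g h : G) :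
    ‖ρ ⁅g, h⁆ - 1‖ ≤ 2 * ‖ρ g - 1‖ * ‖ρ h - 1‖ := by
  have hcomm : ρ ⁅g, h⁆ - 1 =
      ((ρ g - 1) * (ρ h - 1) - (ρ h - 1) * (ρ g - 1)) * ρ (g⁻¹ * h⁻¹) := by
    have hgh : ρ ⁅g, h⁆ = ρ g * ρ h * ρ (g⁻¹ * h⁻¹) := by
      simp only [← map_mul, commutatorElement_def, mul_assoc]
    have hhg : ρ h * ρ g * ρ (g⁻¹ * h⁻¹) = 1 := by
      simp only [← map_mul, mul_assoc, mul_inv_cancel_left, mul_inv_cancel, map_one]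
    calc ρ ⁅g, h⁆ - 1 = ρ g * ρ h * ρ (g⁻¹ * h⁻¹) - ρ h * ρ g * ρ (g⁻¹ * h⁻¹) := by rw [hgh, hhg]
      _ = _ := by noncomm_ring
  calc ‖ρ ⁅g, h⁆ - 1‖
      ≤ ‖(ρ g - 1) * (ρ h - 1) - (ρ h - 1) * (ρ g - 1)‖ * ‖ρ (g⁻¹ * h⁻¹)‖ :=
        hcomm ▸ norm_mul_le _ _
    _ ≤ ‖(ρ g - 1) * (ρ h - 1) - (ρ h - 1) * (ρ g - 1)‖ * 1 := by
        gcongr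
        exact norm_le_one_of_isometric hiso _
    _ ≤ ‖ρ g - 1‖ * ‖ρ h - 1‖ + ‖ρ h - 1‖ * ‖ρ g - 1‖ := by
        rw [mul_one]
        exact (norm_sub_le _ _).trans (add_le_add (norm_mul_le _ _) (norm_mul_le _ _))
    _ = 2 * ‖ρ g - 1‖ * ‖ρ h - 1‖ := by ring

lemma apply_map_mul (g h : G) (v : V) : ρ (g * h) v = ρ g (ρ h v) := by
  rw [map_mul]
  rfl

lemma coe_map_pow_orderOf (g : G) : (ρ g : Module.End ℂ V) ^ orderOf g = 1 := by
  rw [← ContinuousLinearMap.toLinearMap_pow, ← map_pow, pow_orderOf_eq_one, map_one,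
    ContinuousLinearMap.toLinearMap_one]

variable [Finite G]

lemma eigenspace_conj_inf_eigenspace_le (hiso : ∀ g v, ‖ρ g v‖ = ‖v‖) {g h : G}
    (hh : ‖ρ h - 1‖ < 1) (l m : ℂ) :
    Module.End.eigenspace (ρ (h * g * h⁻¹) : Module.End ℂ V) l ⊓
      Module.End.eigenspace (ρ g : Module.End ℂ V) m ≤
    Module.End.eigenspace (ρ g : Module.End ℂ V) l := by
  obtain rfl | hlm := eq_or_ne l m
  · exact inf_le_right
  intro v hv
  simp only [Submodule.mem_inf, Module.End.mem_eigenspace_iff, ContinuousLinearMap.coe_coe] at hv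
  obtain ⟨hconj, hg⟩ := hv
  set w := ρ h⁻¹ v with hw
  have hgw : ρ g w = l • w := by
    rw [hw, ← map_smul, ← hconj, ← apply_map_mul, ← apply_map_mul]
    group
  have hdist : v - w = (ρ h - 1) w := by
    simp [hw, ← apply_map_mul]
  have hle : ‖v‖ ≤ ‖v - w‖ :=
    norm_le_norm_sub_of_eigenvectors (f := (ρ g : Module.End ℂ V)) (hiso g) (orderOf_pos g).ne'
      (coe_map_pow_orderOf g) hlm.symm hg hgw
  have hlt : ‖v - w‖ ≤ ‖ρ h - 1‖ * ‖v‖ := by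
    rw [hdist, ← hiso h⁻¹ v]
    exact ContinuousLinearMap.le_opNorm _ _
  have hv0 : v = 0 := by
    by_contra hv0
    nlinarith [norm_pos_iff.mpr hv0]
  exact hv0 ▸ zero_mem _

variable [FiniteDimensional ℂ V]

lemma iSup_eigenspace_map_eq_top (g : G) :
    ⨆ l, Module.End.eigenspace (ρ g : Module.End ℂ V) l = ⊤ :=
  (isSemisimple_of_pow_eq_one (orderOf_pos g).ne' (coe_map_pow_orderOf g)).iSup_eigenspace_eq_top

lemma conj_eq_of_commute (hinj : Function.Injective ρ) (hiso : ∀ g v, ‖ρ g v‖ = ‖v‖) {g h : G}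
    (hh : ‖ρ h - 1‖ < 1) (hcomm : Commute (h * g * h⁻¹) g) : h * g * h⁻¹ = g := by
  have hle (l : ℂ) : Module.End.eigenspace (ρ (h * g * h⁻¹) : Module.End ℂ V) l ≤
      Module.End.eigenspace (ρ g : Module.End ℂ V) l := by
    have hstable : ∀ v ∈ Module.End.eigenspace (ρ (h * g * h⁻¹) : Module.End ℂ V) l,
        ρ g v ∈ Module.End.eigenspace (ρ (h * g * h⁻¹) : Module.End ℂ V) l :=
      Module.End.mapsTo_genEigenspace_of_comm
        ((hcomm.map ρ).map (ContinuousLinearMap.toLinearMapRingHom (R₁ := ℂ) (M₁ := V))) l 1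
    rw [Submodule.eq_iSup_inf_genEigenspace 1 hstable (iSup_eigenspace_map_eq_top g)]
    exact iSup_le fun m => eigenspace_conj_inf_eigenspace_le hiso hh l m
  have hagree :
      LinearMap.eqLocus (ρ (h * g * h⁻¹) : Module.End ℂ V) (ρ g : Module.End ℂ V) = ⊤ := by
    rw [eq_top_iff, ← iSup_eigenspace_map_eq_top (h * g * h⁻¹)]
    exact iSup_le fun l v hv => (Module.End.mem_eigenspace_iff.mp hv).trans
      (Module.End.mem_eigenspace_iff.mp (hle l hv)).symm
  exact hinj (ContinuousLinearMap.coe_injective (LinearMap.eqLocus_eq_top.mp hagree))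

lemma commute_of_norm_map_sub_one_lt (hinj : Function.Injective ρ) (hiso : ∀ g v, ‖ρ g v‖ = ‖v‖)
    {g h : G} (hg : ‖ρ g - 1‖ < 1 / 2) (hh : ‖ρ h - 1‖ < 1 / 2) : Commute g h := by
  have : IsTrans G (InvImage (· < ·) fun x => ‖ρ x - 1‖) := ⟨fun _ _ _ => lt_trans⟩
  have : Std.Irrefl (InvImage (· < ·) fun x : G => ‖ρ x - 1‖) := ⟨fun _ => lt_irrefl _⟩
  induction h using (Finite.wellFounded_of_trans_of_irrefl
    (InvImage (· < ·) fun x => ‖ρ x - 1‖)).induction with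
  | _ h ih =>
  obtain rfl | hne := eq_or_ne h 1
  · exact Commute.one_right g
  have hpos : 0 < ‖ρ h - 1‖ :=
    norm_pos_iff.mpr (sub_ne_zero.mpr fun h1 => hne (hinj (by simp [h1])))
  have hlt : ‖ρ ⁅g, h⁆ - 1‖ < ‖ρ h - 1‖ := by
    nlinarith [norm_map_commutator_sub_one_le hiso g h]
  have hcomm : Commute g ⁅g, h⁆ := ih ⁅g, h⁆ hlt (hlt.trans hh)
  have hconj : Commute (h * g * h⁻¹) g := by
    have : h * g * h⁻¹ = ⁅g, h⁆⁻¹ * g := by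
      rw [commutatorElement_def]
      group
    rw [this]
    exact (hcomm.symm.inv_left).mul_left (Commute.refl g)
  have hfix : h * g * h⁻¹ = g := conj_eq_of_commute hinj hiso (hh.trans (by norm_num)) hconj
  exact (mul_inv_eq_iff_eq_mul.mp hfix).symm

lemma index_closure_norm_map_sub_one_lt_le (hiso : ∀ g v, ‖ρ g v‖ = ‖v‖) :
    (Subgroup.closure {g : G | ‖ρ g - 1‖ < 1 / 2}).index ≤ 5 ^ (2 * Module.finrank ℂ V ^ 2) := by
  classical
  set A := Subgroup.closure {g : G | ‖ρ g - 1‖ < 1 / 2}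
  have : Fintype (G ⧸ A) := Fintype.ofFinite _
  let f (q : G ⧸ A) : V →L[ℂ] V := (2 : ℂ) • ρ q.out
  have hsep (a b : G ⧸ A) (hab : a ≠ b) : 1 ≤ ‖f a - f b‖ := by
    have hmem : a.out⁻¹ * b.out ∉ A := fun h => hab (by
      rw [← a.out_eq', ← b.out_eq']
      exact QuotientGroup.eq.mpr h)
    have hfar : 1 / 2 ≤ ‖ρ (a.out⁻¹ * b.out) - 1‖ :=
      not_lt.mp fun h => hmem (Subgroup.subset_closure h)
    have hle := norm_map_inv_mul_sub_one_le hiso a.out b.out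
    have hnorm : ‖f a - f b‖ = 2 * ‖ρ a.out - ρ b.out‖ := by
      simp [f, ← smul_sub, norm_smul]
    linarith
  have hinj : Function.Injective f := fun a b hab => by
    by_contra h
    simpa [hab] using (hsep a b h).trans_lt' one_pos
  have hcard := Besicovitch.card_le_of_separated (Finset.univ.image f) (by
    simp only [Finset.mem_image, Finset.mem_univ, true_and, forall_exists_index,
      forall_apply_eq_imp_iff]
    intro q
    rw [norm_smul, Complex.norm_ofNat]
    linarith [norm_le_one_of_isometric hiso q.out]) (by
    simp only [Finset.mem_image, Finset.mem_univ, true_and, forall_exists_index,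
      forall_apply_eq_imp_iff]
    exact fun a b hab => hsep a b (ne_of_apply_ne f hab))
  rwa [Finset.card_image_of_injective _ hinj, Finset.card_univ, ← Nat.card_eq_fintype_card,
    finrank_real_of_complex,
    ← (LinearMap.toContinuousLinearMap (𝕜 := ℂ) (E := V) (F' := V)).finrank_eq,
    Module.finrank_linearMap, ← sq] at hcard

theorem exists_isMulCommutative_index_le_of_isometric (hinj : Function.Injective ρ)
    (hiso : ∀ g v, ‖ρ g v‖ = ‖v‖) :
    ∃ A : Subgroup G, IsMulCommutative A ∧ A.index ≤ 5 ^ (2 * Module.finrank ℂ V ^ 2) :=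
  ⟨_, Subgroup.isMulCommutative_closure fun _ hg _ hh =>
    commute_of_norm_map_sub_one_lt hinj hiso hg hh, index_closure_norm_map_sub_one_lt_le hiso⟩

lemma norm_comp_equiv {α β E : Type*} [Fintype α] [Fintype β] [SeminormedAddCommGroup E]
    (f : β → E) (e : α ≃ β) : ‖f ∘ e‖ = ‖f‖ := by
  rw [Pi.norm_def, Pi.norm_def, ← Finset.map_univ_equiv e, Finset.sup_map]
  rfl

theorem exists_isMulCommutative_index_le_of_complex {G V : Type*} [Group G] [Finite G]
    [AddCommGroup V] [Module ℂ V] [FiniteDimensional ℂ V] {ρ : G →* Module.End ℂ V}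
    (hinj : Function.Injective ρ) :
    ∃ A : Subgroup G, IsMulCommutative A ∧ A.index ≤ 5 ^ (2 * Module.finrank ℂ V ^ 2) := by
  have := Fintype.ofFinite G
  let e := (Module.finBasis ℂ V).equivFun
  let orbit : V →ₗ[ℂ] (G → Fin (Module.finrank ℂ V) → ℂ) :=
    LinearMap.pi fun g => e.toLinearMap ∘ₗ ρ g
  have horbit : Function.Injective orbit := fun v w h => e.injective (by
    simpa [orbit] using congrFun h 1)
  -- The sup norm along the orbits is invariant under `G`.
  let := NormedAddCommGroup.induced V _ orbit horbit
  let := NormedSpace.induced ℂ V _ orbit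
  have hiso (g : G) (v : V) : ‖ρ g v‖ = ‖v‖ := by
    change ‖orbit (ρ g v)‖ = ‖orbit v‖
    have hshift : orbit (ρ g v) = orbit v ∘ Equiv.mulRight g := by
      funext x
      simp [orbit]
    rw [hshift, norm_comp_equiv]
  let toCLM : Module.End ℂ V ≃ₐ[ℂ] (V →L[ℂ] V) := Module.End.toContinuousLinearMap V
  let ρCLM : G →* V →L[ℂ] V := (toCLM : Module.End ℂ V →* V →L[ℂ] V).comp ρ
  have hinjCLM : Function.Injective ρCLM := toCLM.injective.comp hinj
  exact exists_isMulCommutative_index_le_of_isometric hinjCLM hiso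

end ComplexJordan

section ModularJordan

lemma exists_section_of_isPGroup_ker {E G : Type*} [Group E] [Group G] [Finite E] {p : ℕ}
    [Fact p.Prime] {π : E →* G} (hπ : Function.Surjective π) (hker : IsPGroup p π.ker)
    (hG : ¬ p ∣ Nat.card G) : ∃ s : G →* E, π.comp s = MonoidHom.id G := by
  obtain ⟨m, hm⟩ := IsPGroup.iff_card.mp hker
  have hindex : π.ker.index = Nat.card G := by
    rw [Subgroup.index_ker, MonoidHom.range_eq_top.mpr hπ, Subgroup.card_top]
  have hcoprime : (Nat.card π.ker).Coprime π.ker.index := by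
    rw [hm, hindex]
    exact ((Nat.Prime.coprime_iff_not_dvd Fact.out).mpr hG).pow_left m
  obtain ⟨H, hH⟩ := Subgroup.exists_right_complement'_of_coprime hcoprime
  have hbij : Function.Bijective (π.comp H.subtype) := by
    constructor
    · refine (injective_iff_map_eq_one _).mpr fun x hx => Subtype.ext ?_
      exact (Subgroup.disjoint_def.mp hH.disjoint) hx x.2
    · intro g
      obtain ⟨e, rfl⟩ := hπ g
      obtain ⟨⟨n, h⟩, rfl⟩ := hH.2 e
      refine ⟨h, ?_⟩
      simp [MonoidHom.mem_ker.mp n.2]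
  let e := MulEquiv.ofBijective _ hbij
  exact ⟨H.subtype.comp e.symm.toMonoidHom, MonoidHom.ext e.apply_symm_apply⟩

lemma exists_lift_of_isPGroup_ker {E Q G : Type*} [Group E] [Group Q] [Group G] [Finite E]
    [Finite G] {p : ℕ} [Fact p.Prime] {π : E →* Q} (hπ : Function.Surjective π)
    (hker : IsPGroup p π.ker) (hG : ¬ p ∣ Nat.card G) (φ : G →* Q) :
    ∃ ψ : G →* E, π.comp ψ = φ := by
  let pullback := (π.comp (MonoidHom.fst E G)).eqLocus (φ.comp (MonoidHom.snd E G))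
  let proj : pullback →* G := (MonoidHom.snd E G).comp pullback.subtype
  have hproj : Function.Surjective proj := fun g =>
    have ⟨e, he⟩ := hπ (φ g)
    ⟨⟨(e, g), he⟩, rfl⟩
  have hkerproj : IsPGroup p proj.ker := by
    rintro ⟨⟨⟨e, g⟩, heg : π e = φ g⟩, hg : g = 1⟩
    obtain ⟨k, hk⟩ := hker ⟨e, by rw [MonoidHom.mem_ker, heg, hg, map_one]⟩
    refine ⟨k, ?_⟩
    simpa [Subtype.ext_iff, hg] using hk
  obtain ⟨s, hs⟩ := exists_section_of_isPGroup_ker hproj hkerproj hG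
  refine ⟨(MonoidHom.fst E G).comp (pullback.subtype.comp s), MonoidHom.ext fun g => ?_⟩
  exact (s g).2.trans (congrArg φ (DFunLike.congr_fun hs g))

section NilpotentKernel

variable {S S' : Type*} {p k : ℕ}

lemma pow_pow_eq_one_of_dvd_sub_one [Ring S] (hp : (p : S) ^ (k + 1) = 0) {x : S}
    (hx : (p : S) ∣ x - 1) : x ^ p ^ k = 1 := by
  obtain ⟨y, hy⟩ := hx
  have hdvd : ((p : Polynomial ℤ) ^ (k + 1)) ∣ (1 + p * .X) ^ p ^ k - 1 ^ p ^ k :=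
    dvd_sub_pow_of_dvd_sub (by simp) k
  have heval := map_dvd (Polynomial.aeval y) hdvd
  rw [sub_eq_iff_eq_add'] at hy
  simpa [hp, ← hy, sub_eq_zero] using heval

lemma isUnit_of_isUnit_map [Ring S] [IsDedekindFiniteMonoid S] [Ring S'] [NeZero p]
    (hp : (p : S) ^ (k + 1) = 0) {f : S →+* S'} (hf : Function.Surjective f)
    (hker : ∀ x, f x = 0 → (p : S) ∣ x) {x : S} (hx : IsUnit (f x)) : IsUnit x := by
  obtain ⟨y', hxy⟩ := hx.exists_right_inv
  obtain ⟨y, rfl⟩ := hf y'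
  have hpow : (x * y) ^ p ^ k = 1 := pow_pow_eq_one_of_dvd_sub_one hp (hker _ (by simp [hxy]))
  exact isUnit_of_mul_isUnit_left (.of_pow_eq_one hpow (pow_ne_zero k (NeZero.ne p)))

lemma dvd_of_mapMatrix_eq_zero {ι : Type*} [Fintype ι] [DecidableEq ι] [CommRing S] [CommRing S']
    {f : S →+* S'} (hker : ∀ x, f x = 0 → (p : S) ∣ x) {M : Matrix ι ι S}
    (hM : f.mapMatrix M = 0) : (p : Matrix ι ι S) ∣ M := by
  choose N hN using fun i j => hker (M i j) (congrFun (congrFun hM i) j)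
  refine ⟨Matrix.of N, ?_⟩
  ext i j
  simp [hN, ← nsmul_eq_mul]

end NilpotentKernel

/-- The reduction `ℤ/pᵏ⁺¹ → ℤ/p`. -/
def zmodPowReduction (p k : ℕ) : ZMod (p ^ (k + 1)) →+* ZMod p :=
  ZMod.castHom (dvd_pow_self p k.succ_ne_zero) (ZMod p)

lemma dvd_of_zmodPowReduction_eq_zero {p k : ℕ} {x : ZMod (p ^ (k + 1))}
    (hx : zmodPowReduction p k x = 0) : (p : ZMod (p ^ (k + 1))) ∣ x := by
  obtain ⟨a, rfl⟩ := ZMod.intCast_surjective x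
  rw [map_intCast, CharP.intCast_eq_zero_iff (ZMod p) p] at hx
  simpa using map_dvd (Int.castRingHom (ZMod (p ^ (k + 1)))) hx

lemma natCast_pow_eq_zero_of_zmod {p k : ℕ} : (p : ZMod (p ^ (k + 1))) ^ (k + 1) = 0 := by
  rw [← Nat.cast_pow, ZMod.natCast_self]

variable {p : ℕ} [Fact p.Prime]

lemma isUnit_of_zmodPowReduction_ne_zero {k : ℕ} {x : ZMod (p ^ (k + 1))}
    (hx : zmodPowReduction p k x ≠ 0) : IsUnit x :=
  isUnit_of_isUnit_map natCast_pow_eq_zero_of_zmod (ZMod.ringHom_surjective _)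
    (fun _ => dvd_of_zmodPowReduction_eq_zero) hx.isUnit

lemma charZero_pi_zmodPow : CharZero (∀ k : ℕ, ZMod (p ^ (k + 1))) := by
  refine charZero_of_inj_zero fun n hn => ?_
  have hdvd : p ^ (n + 1) ∣ n := (ZMod.natCast_eq_zero_iff _ _).mp (congrFun hn n)
  by_contra hn0
  exact (Nat.lt_pow_self (Fact.out : p.Prime).one_lt).not_ge
    ((pow_le_pow_right₀ (Fact.out : p.Prime).one_le n.le_succ).trans
      (Nat.le_of_dvd (Nat.pos_of_ne_zero hn0) hdvd))

variable {ι : Type*} [Fintype ι] [DecidableEq ι]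

lemma exists_forall_map_evalRingHom_comp_eq {G κ : Type*} [Group G] {R : κ → Type*}
    [∀ k, CommRing (R k)] (ψ : ∀ k, G →* GL ι (R k)) :
    ∃ Ψ : G →* GL ι (∀ k, R k),
      ∀ k, (GeneralLinearGroup.map (Pi.evalRingHom R k)).comp Ψ = ψ k := by
  let ΨM : G →* Matrix ι ι (∀ k, R k) :=
    { toFun g := Matrix.of fun i j k => ψ k g i j
      map_one' := by
        ext i j k
        by_cases hij : i = j <;> simp [Matrix.one_apply, hij]
      map_mul' g h := by
        ext i j k
        simp [Matrix.mul_apply] }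
  exact ⟨ΨM.toHomUnits, fun k => MonoidHom.ext fun g => GeneralLinearGroup.ext fun i j => rfl⟩

variable {G : Type*} [Group G] [Finite G]

lemma exists_lift_zmodPow (hG : ¬ p ∣ Nat.card G) (φ : G →* GL ι (ZMod p)) (k : ℕ) :
    ∃ ψ : G →* GL ι (ZMod (p ^ (k + 1))),
      (GeneralLinearGroup.map (zmodPowReduction p k)).comp ψ = φ := by
  have hp : (p : Matrix ι ι (ZMod (p ^ (k + 1)))) ^ (k + 1) = 0 := by
    rw [← map_natCast (algebraMap (ZMod (p ^ (k + 1))) _), ← map_pow,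
      natCast_pow_eq_zero_of_zmod, map_zero]
  have hker (M : Matrix ι ι (ZMod (p ^ (k + 1)))) :
      (zmodPowReduction p k).mapMatrix M = 0 → (p : Matrix ι ι (ZMod (p ^ (k + 1)))) ∣ M :=
    dvd_of_mapMatrix_eq_zero fun _ => dvd_of_zmodPowReduction_eq_zero
  have hsurj : Function.Surjective ((zmodPowReduction p k).mapMatrix (m := ι)) := by
    intro N
    choose M hM using fun i j => ZMod.ringHom_surjective (zmodPowReduction p k) (N i j)
    exact ⟨Matrix.of M, Matrix.ext hM⟩
  refine exists_lift_of_isPGroup_ker (p := p) (fun N => ?_) (fun M => ⟨k, ?_⟩) hG φ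
  · obtain ⟨M, hM⟩ := hsurj N
    have hunit : IsUnit M := isUnit_of_isUnit_map hp hsurj hker (hM ▸ N.isUnit)
    exact ⟨hunit.unit, Units.ext hM⟩
  · refine Subtype.ext (Units.ext (pow_pow_eq_one_of_dvd_sub_one hp (hker _ ?_)))
    rw [map_sub, map_one, sub_eq_zero]
    exact congrArg Units.val M.2

lemma exists_injective_complex_of_zmod (hG : ¬ p ∣ Nat.card G) {φ : G →* GL ι (ZMod p)}
    (hφ : Function.Injective φ) : ∃ θ : G →* GL ι ℂ, Function.Injective θ := by
  choose ψ hψ using exists_lift_zmodPow hG φ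
  obtain ⟨Ψ, hΨ⟩ := exists_forall_map_evalRingHom_comp_eq ψ
  have hunit : ∀ x ∈ {x : G | x ≠ 1}, HasUnitEntrySubOne (Ψ x) := by
    intro x hx
    obtain ⟨i, j, hij⟩ := hasUnitEntrySubOne_of_ne_one (hφ.ne_iff' (map_one φ) |>.mpr hx)
    refine ⟨i, j, Pi.isUnit_iff.mpr fun k => isUnit_of_zmodPowReduction_ne_zero ?_⟩
    convert hij.ne_zero using 1
    rw [← hψ k, ← hΨ k]
    by_cases hij' : i = j <;> simp [hij']
  obtain ⟨R, _, ρ, -, hρ⟩ := exists_model Ψ (Set.toFinite _) hunit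
  have := charZero_pi_zmodPow (p := p)
  obtain ⟨τ⟩ := nonempty_ringHom_complex R
  refine ⟨(GeneralLinearGroup.map τ).comp ρ, (injective_iff_map_eq_one _).mpr fun x => ?_⟩
  contrapose!
  exact fun hx => (hρ x hx).map_ne_one τ

theorem exists_isMulCommutative_index_le_of_zmod (hG : ¬ p ∣ Nat.card G)
    {φ : G →* GL ι (ZMod p)} (hφ : Function.Injective φ) :
    ∃ A : Subgroup G, IsMulCommutative A ∧ A.index ≤ 5 ^ (2 * Fintype.card ι ^ 2) := by
  obtain ⟨θ, hθ⟩ := exists_injective_complex_of_zmod hG hφ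
  let ρ : G →* Module.End ℂ (ι → ℂ) :=
    (Units.coeHom _).comp (GeneralLinearGroup.toLin.toMonoidHom.comp θ)
  have hρ : Function.Injective ρ :=
    Units.val_injective.comp (GeneralLinearGroup.toLin.injective.comp hθ)
  simpa using exists_isMulCommutative_index_le_of_complex hρ

end ModularJordan

section SemisimpleReduction

variable {ι K L : Type*} [Fintype ι] [Field K] [Field L]

lemma isSemisimple_mulVecLin_map [PerfectField K] [Algebra K L] {M : Matrix ι ι K}
    (hM : Module.End.IsSemisimple M.mulVecLin) :
    Module.End.IsSemisimple (M.map (algebraMap K L)).mulVecLin := by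
  classical
  have hsep : (minpoly K M).Separable := by
    rw [PerfectField.separable_iff_squarefree, ← Matrix.minpoly_toLin']
    exact hM.minpoly_squarefree
  refine Module.End.isSemisimple_of_squarefree_aeval_eq_zero
    (hsep.map (f := algebraMap K L)).squarefree ?_
  have haeval : Polynomial.aeval (M.map (algebraMap K L)) (minpoly K M) = 0 := by
    have := Polynomial.aeval_algHom_apply (Algebra.ofId K L).mapMatrix M (minpoly K M)
    rwa [minpoly.aeval, map_zero] at this
  refine (Polynomial.aeval_algHom_apply (toLinAlgEquiv' (R := L)) _ _).trans ?_
  rw [Polynomial.aeval_map_algebraMap, haeval, map_zero]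

variable [DecidableEq ι]

lemma exists_isDiag_conj [IsAlgClosed L] {g : GL ι L}
    (hg : Module.End.IsSemisimple (g : Matrix ι ι L).mulVecLin) :
    ∃ c : GL ι L, ((c * g * c⁻¹ : GL ι L) : Matrix ι ι L).IsDiag := by
  let f : Module.End L (ι → L) := (g : Matrix ι ι L).mulVecLin
  have hspan : ⊤ ≤ Submodule.span L (⋃ l, (f.eigenspace l : Set (ι → L))) := by
    rw [Submodule.span_iUnion]
    simpa using hg.iSup_eigenspace_eq_top.ge
  let b' := Module.Basis.ofSpan hspan
  let b := b'.reindex (b'.indexEquiv (Pi.basisFun L ι))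
  have hb (j : ι) : ∃ l : L, f (b j) = l • b j := by
    have hj : b j ∈ Set.range b' := by simp [b]
    simpa using Module.Basis.ofSpan_subset hspan hj
  choose d hd using hb
  have := (Pi.basisFun L ι).invertibleToMatrix b
  let c : GL ι L := unitOfInvertible ((Pi.basisFun L ι).toMatrix b)
  have hgc : (g : Matrix ι ι L) * c = c * diagonal d := by
    ext i j
    rw [mul_diagonal, mul_comm]
    exact congrFun (hd j) i
  refine ⟨c⁻¹, ?_⟩
  rw [inv_inv, mul_assoc, Units.val_mul, Units.val_mul, hgc, ← mul_assoc, ← Units.val_mul]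
  simp

lemma pow_eq_one_of_isDiag {p T : ℕ} [Fact p.Prime] (hT : p - 1 ∣ T) {D : GL ι (ZMod p)}
    (hD : (D : Matrix ι ι (ZMod p)).IsDiag) : D ^ T = 1 := by
  obtain ⟨q, rfl⟩ := hT
  have hdet : (D : Matrix ι ι (ZMod p)).det ≠ 0 := D.det.ne_zero
  rw [← hD.diagonal_diag, det_diagonal, Finset.prod_ne_zero_iff] at hdet
  have hpow : (D : Matrix ι ι (ZMod p)).diag ^ (p - 1) = 1 :=
    funext fun i => ZMod.pow_card_sub_one_eq_one (hdet i (Finset.mem_univ i))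
  refine Units.ext ?_
  rw [pow_mul, Units.val_pow_eq_pow_val, Units.val_pow_eq_pow_val, ← hD.diagonal_diag,
    diagonal_pow, hpow]
  simp

theorem exists_pow_lt_prod_hom_zmod_of_isDiag {Γ : Type*} [Group Γ] [Group.FG Γ] [CharZero K]
    (ρ : Γ →* GL ι K) {x : Γ} (hx : ρ x ≠ 1) (A : ℕ) :
    ∃ (P : Finset ℕ) (T : ℕ), 0 < T ∧ T ^ A < ∏ p ∈ P, p ∧ ∀ p ∈ P, p.Prime ∧
      ∃ θ : Γ →* GL ι (ZMod p), θ x ≠ 1 ∧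
        ∀ y, (ρ y : Matrix ι ι K).IsDiag → θ y ^ T = 1 := by
  obtain ⟨R, _, ρR, hρR, hxR⟩ := exists_model ρ (Set.finite_singleton x)
    (by simpa using hasUnitEntrySubOne_of_ne_one hx)
  obtain ⟨P, T, hT, hlt, hP⟩ := exists_pow_lt_prod_ringHom_zmod R A
  refine ⟨P, T, hT, hlt, fun p hp => ?_⟩
  obtain ⟨hprime, hdvd, ⟨τ⟩⟩ := hP p hp
  have := Fact.mk hprime
  refine ⟨hprime, (GeneralLinearGroup.map τ).comp ρR, (hxR x rfl).map_ne_one τ, fun y hy => ?_⟩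
  have hyR : (ρR y : Matrix ι ι R).IsDiag := fun i j hij =>
    Subtype.ext (by simpa [← hρR] using hy hij)
  exact pow_eq_one_of_isDiag hdvd (hyR.map (map_zero τ))

theorem exists_pow_lt_prod_hom_zmod_of_isSemisimple {Γ κ : Type*} [Group Γ] [Group.FG Γ]
    [Finite κ] [CharZero K] (ρ : Γ →* GL ι K) {x : Γ} (hx : ρ x ≠ 1) {γ : κ → Γ}
    (hγ : ∀ i, Module.End.IsSemisimple (ρ (γ i) : Matrix ι ι K).mulVecLin) (A : ℕ) :
    ∃ (P : Finset ℕ) (T : ℕ), 0 < T ∧ T ^ A < ∏ p ∈ P, p ∧ ∀ p ∈ P, p.Prime ∧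
      ∃ θ : Γ →* GL ι (ZMod p), θ x ≠ 1 ∧ ∀ i, θ (γ i) ^ T = 1 := by
  let ρL : Γ →* GL ι (AlgebraicClosure K) := (GeneralLinearGroup.map (algebraMap K _)).comp ρ
  choose c hc using fun i => exists_isDiag_conj (g := ρL (γ i)) (isSemisimple_mulVecLin_map (hγ i))
  let Δ : Subgroup (GL ι (AlgebraicClosure K)) := ρL.range ⊔ Subgroup.closure (Set.range c)
  have : Group.FG Δ := (Group.fg_iff_subgroup_fg Δ).mpr <|
    ((Group.fg_iff_subgroup_fg _).mp inferInstance).sup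
      ((Subgroup.fg_iff _).mpr ⟨_, rfl, Set.finite_range c⟩)
  let φ : Γ →* Δ := ρL.codRestrict Δ fun y => Subgroup.mem_sup_left ⟨y, rfl⟩
  have hφx : Δ.subtype (φ x) ≠ 1 := (hasUnitEntrySubOne_of_ne_one hx).map_ne_one _
  obtain ⟨P, T, hT, hlt, hP⟩ := exists_pow_lt_prod_hom_zmod_of_isDiag Δ.subtype hφx A
  refine ⟨P, T, hT, hlt, fun p hp => ?_⟩
  obtain ⟨hprime, θ, hθx, hθ⟩ := hP p hp
  refine ⟨hprime, θ.comp φ, hθx, fun i => ?_⟩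
  let cΔ : Δ := ⟨c i, Subgroup.mem_sup_right (Subgroup.subset_closure ⟨i, rfl⟩)⟩
  have hconj := hθ (cΔ * φ (γ i) * cΔ⁻¹) (hc i)
  simpa [conj_pow] using hconj

end SemisimpleReduction

section BoundedGeneration

variable {Γ H : Type*} [Group Γ] [Group H] {r : ℕ} {γ : Fin r → Γ}

/-- The group `Γ` is the product `⟨γ₁⟩⋯⟨γᵣ⟩` of the cyclic subgroups generated by the `γᵢ`, in this
order. -/
def IsBoundedlyGeneratedBy (γ : Fin r → Γ) : Prop :=
  ∀ x, ∃ k : Fin r → ℤ, x = (List.ofFn fun i => γ i ^ k i).prod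

namespace IsBoundedlyGeneratedBy

lemma map (h : IsBoundedlyGeneratedBy γ) {f : Γ →* H} (hf : Function.Surjective f) :
    IsBoundedlyGeneratedBy (f ∘ γ) := by
  intro y
  obtain ⟨x, rfl⟩ := hf y
  obtain ⟨k, rfl⟩ := h x
  refine ⟨k, ?_⟩
  rw [map_list_prod, List.map_ofFn]
  simp only [Function.comp_def, map_zpow]

lemma group_fg (h : IsBoundedlyGeneratedBy γ) : Group.FG Γ := by
  refine Group.fg_iff.mpr
    ⟨Set.range γ, (Subgroup.eq_top_iff' _).mpr fun x => ?_, Set.finite_range γ⟩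
  obtain ⟨k, rfl⟩ := h x
  refine Subgroup.list_prod_mem _ fun y hy => ?_
  obtain ⟨i, rfl⟩ := (List.mem_ofFn' _ _).mp hy
  exact Subgroup.zpow_mem _ (Subgroup.subset_closure (Set.mem_range_self i)) _

lemma finite_and_card_le (h : IsBoundedlyGeneratedBy γ) {T : ℕ} (hT : 0 < T)
    (hγ : ∀ i, γ i ^ T = 1) : Finite Γ ∧ Nat.card Γ ≤ T ^ r := by
  have hfin (i : Fin r) : Finite (Subgroup.zpowers (γ i)) :=
    (isOfFinOrder_iff_pow_eq_one.mpr ⟨T, hT, hγ i⟩).finite_zpowers.to_subtype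
  let words : (∀ i, Subgroup.zpowers (γ i)) → Γ := fun y => (List.ofFn fun i => (y i : Γ)).prod
  have hsurj : Function.Surjective words := by
    intro x
    obtain ⟨k, rfl⟩ := h x
    exact ⟨fun i => ⟨γ i ^ k i, k i, rfl⟩, rfl⟩
  refine ⟨Finite.of_surjective words hsurj, ?_⟩
  calc Nat.card Γ ≤ ∏ i, orderOf (γ i) := by
        simpa [Nat.card_pi] using Nat.card_le_card_of_surjective words hsurj
    _ ≤ ∏ _i : Fin r, T := Finset.prod_le_prod' fun i _ => orderOf_le_of_pow_eq_one hT (hγ i)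
    _ = T ^ r := by simp

-- If every `p ∈ P` divided the order of `θ p (Γ)`, then `∏ p` would divide the order of the image
-- of `Γ` in the product of the `H p`, which is at most `T ^ r`.
lemma exists_not_dvd_card_range (h : IsBoundedlyGeneratedBy γ) {P : Finset ℕ} {T : ℕ}
    (hP : ∀ p ∈ P, p.Prime) (hT : 0 < T) (hlt : T ^ r < ∏ p ∈ P, p) {H : P → Type*}
    [∀ p, Group (H p)] {θ : ∀ p, Γ →* H p} (hθ : ∀ p i, θ p (γ i) ^ T = 1) :
    ∃ p : P, ¬ (p : ℕ) ∣ Nat.card (θ p).range := by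
  by_contra! hdvd
  let Θ : Γ →* ∀ p, H p := MonoidHom.pi θ
  obtain ⟨_, hcard⟩ := (h.map Θ.rangeRestrict_surjective).finite_and_card_le hT
    fun i => Subtype.ext (funext fun p => hθ p i)
  have hprod : ∏ p ∈ P, p ∣ Nat.card Θ.range := by
    refine Finset.prod_primes_dvd _ (fun p hp => (hP p hp).prime) fun p hp => ?_
    have hrange : (θ ⟨p, hp⟩).range = Θ.range.map (Pi.evalMonoidHom H ⟨p, hp⟩) :=
      MonoidHom.range_comp (Pi.evalMonoidHom H ⟨p, hp⟩) Θ
    exact (hrange ▸ hdvd ⟨p, hp⟩).trans (Θ.range.card_map_dvd _)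
  exact (hcard.trans_lt hlt).not_ge (Nat.le_of_dvd Nat.card_pos hprod)

theorem exists_index_le_forall_commutator_ne {ι K : Type*} [Fintype ι] [DecidableEq ι] [Field K]
    [CharZero K] (h : IsBoundedlyGeneratedBy γ) {ρ : Γ →* GL ι K}
    (hγ : ∀ i, Module.End.IsSemisimple (ρ (γ i) : Matrix ι ι K).mulVecLin) {x : Γ}
    (hx : ρ x ≠ 1) :
    ∃ A : Subgroup Γ, A.FiniteIndex ∧ A.index ≤ 5 ^ (2 * Fintype.card ι ^ 2) ∧
      ∀ u ∈ A, ∀ v ∈ A, ⁅u, v⁆ ≠ x := by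
  have := h.group_fg
  obtain ⟨P, T, hT, hlt, hP⟩ := exists_pow_lt_prod_hom_zmod_of_isSemisimple ρ hx hγ r
  choose hprime θ hθx hθ using fun p : P => hP p p.2
  obtain ⟨p, hp⟩ := h.exists_not_dvd_card_range (fun p hp => (hP p hp).1) hT hlt hθ
  have := Fact.mk (hprime p)
  have : Finite (θ p).range := Nat.finite_of_card_ne_zero fun h0 => hp (h0 ▸ dvd_zero _)
  obtain ⟨A, _, hA⟩ := exists_isMulCommutative_index_le_of_zmod hp (θ p).range.subtype_injective
  have hindex := A.index_comap_of_surjective (θ p).rangeRestrict_surjective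
  refine ⟨A.comap (θ p).rangeRestrict, ⟨?_⟩, hindex.trans_le hA, ?_⟩
  · exact hindex ▸ Subgroup.index_ne_zero_of_finite
  · rintro u hu v hv rfl
    refine hθx p ?_
    have hcomm := setLike_mul_comm (Subgroup.mem_comap.mp hu) (Subgroup.mem_comap.mp hv)
    rw [map_commutatorElement, commutatorElement_eq_one_iff_mul_comm]
    exact congrArg Subtype.val hcomm

end IsBoundedlyGeneratedBy

lemma finite_monoidHom [Group.FG Γ] [Finite H] : Finite (Γ →* H) := by
  obtain ⟨S, hS, hfin⟩ := Group.fg_iff.mp ‹Group.FG Γ›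
  have := hfin.to_subtype
  refine Finite.of_injective (fun (f : Γ →* H) (s : S) => f s) fun f g hfg => ?_
  exact MonoidHom.eq_of_eqOn_dense hS fun s hs => congrFun hfg ⟨s, hs⟩

-- A subgroup of index `m` contains the kernel of the permutation action on its cosets, and `Γ` has
-- finitely many actions on `m` letters.
lemma exists_finiteIndex_forall_le_of_index_le [Group.FG Γ] (J : ℕ) :
    ∃ Γ₀ : Subgroup Γ, Γ₀.FiniteIndex ∧
      ∀ A : Subgroup Γ, A.FiniteIndex → A.index ≤ J → Γ₀ ≤ A := by
  have (m : ℕ) : Finite (Γ →* Equiv.Perm (Fin m)) := finite_monoidHom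
  refine ⟨⨅ m : Fin (J + 1), ⨅ f : Γ →* Equiv.Perm (Fin m), f.ker,
    Subgroup.finiteIndex_iInf fun m => Subgroup.finiteIndex_iInf fun f =>
      Subgroup.finiteIndex_ker f, fun A _ hJ => ?_⟩
  let e : (Γ ⧸ A) ≃ Fin A.index := Finite.equivFin (Γ ⧸ A)
  let f : Γ →* Equiv.Perm (Fin A.index) :=
    e.permCongrHom.toMonoidHom.comp (MulAction.toPermHom Γ (Γ ⧸ A))
  have hker : f.ker = A.normalCore := by
    rw [A.normalCore_eq_ker]
    exact MonoidHom.ker_comp_of_injective _ _ e.permCongrHom.injective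
  calc ⨅ m : Fin (J + 1), ⨅ f : Γ →* Equiv.Perm (Fin m), f.ker
      ≤ f.ker := (iInf_le _ (⟨A.index, Nat.lt_succ_of_le hJ⟩ : Fin (J + 1))).trans (iInf_le _ f)
    _ ≤ A := hker.trans_le A.normalCore_le

theorem IsBoundedlyGeneratedBy.exists_finiteIndex_isMulCommutative {ι K : Type*} [Fintype ι]
    [DecidableEq ι] [Field K] [CharZero K] (h : IsBoundedlyGeneratedBy γ) {ρ : Γ →* GL ι K}
    (hρ : Function.Injective ρ)
    (hγ : ∀ i, Module.End.IsSemisimple (ρ (γ i) : Matrix ι ι K).mulVecLin) :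
    ∃ Γ₀ : Subgroup Γ, Γ₀.FiniteIndex ∧ IsMulCommutative Γ₀ := by
  have := h.group_fg
  obtain ⟨Γ₀, hfin, hle⟩ :=
    exists_finiteIndex_forall_le_of_index_le (Γ := Γ) (5 ^ (2 * Fintype.card ι ^ 2))
  refine ⟨Γ₀, hfin, .of_setLike_mul_comm fun u hu v hv => ?_⟩
  by_contra huv
  have hx : ρ ⁅u, v⁆ ≠ 1 :=
    (map_ne_one_iff ρ hρ).mpr (mt commutatorElement_eq_one_iff_mul_comm.mp huv)
  obtain ⟨A, hA, hindex, hne⟩ := h.exists_index_le_forall_commutator_ne hγ hx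
  exact hne u (hle A hA hindex hu) v (hle A hA hindex hv) rfl

end BoundedGeneration

theorem stmt_1_general {K : Type*} [Field K] [CharZero K] {n : ℕ} (Γ : Subgroup (GL (Fin n) K))
    (r : ℕ) (γ : Fin r → GL (Fin n) K) (hmem : ∀ i, γ i ∈ Γ)
    (hgen : ∀ x ∈ Γ, ∃ k : Fin r → ℤ, x = (List.ofFn fun i => γ i ^ k i).prod)
    (hss : ∀ i, IsSemisimpleElt (γ i)) :
    ∃ Γ₀ : Subgroup Γ, Γ₀.FiniteIndex ∧ IsMulCommutative Γ₀ := by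
  have hbounded : IsBoundedlyGeneratedBy fun i => (⟨γ i, hmem i⟩ : Γ) := by
    intro x
    obtain ⟨k, hk⟩ := hgen x x.2
    refine ⟨k, Subtype.ext ?_⟩
    rw [hk, Subgroup.val_list_prod, List.map_ofFn]
    rfl
  exact hbounded.exists_finiteIndex_isMulCommutative Γ.subtype_injective hss

/-- A linear group over a field of characteristic zero that is boundedly generated by
semi-simple elements is virtually solvable. -/
theorem stmt_1 {K : Type*} [Field K] [CharZero K] {n : ℕ} (hn : 1 ≤ n)
    (Γ : Subgroup (GL (Fin n) K)) (r : ℕ) (γ : Fin r → GL (Fin n) K)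
    (hmem : ∀ i, γ i ∈ Γ)
    (hgen : ∀ x ∈ Γ, ∃ k : Fin r → ℤ, x = (List.ofFn fun i => γ i ^ k i).prod)
    (hss : ∀ i, IsSemisimpleElt (γ i)) :
    IsVirtuallySolvable ↥Γ := by
  obtain ⟨Γ₀, hindex, hcomm⟩ := stmt_1_general Γ r γ hmem hgen hss
  exact ⟨Γ₀, hindex, Group.isSolvable_of_comm hcomm.is_comm.comm⟩
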